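/- arXiv:2411.11271 — 2 statements merged into one kernel-verified Lean document; each statement's English description precedes it below -/
import Mathlib

section
/- Fix an integer k ≥ 0. Let Ẑ be an F_k-measurable 𝔹-valued random variable and let δ₂ ∈ (0,1) and r₂ ≥ 0 be such that P(‖μ − Ẑ‖ ≥ r₂) ≤ δ₂. For λ > 0 and n > k define μ̂_n(k) := (1/(n−k))·Σ_{m=k+1}^n ( Trunc(λ(X_m − Ẑ))·(X_m − Ẑ) + Ẑ ). Then for every δ₁ ∈ (0,1) with δ₁ + δ₂ ≤ 1, with probability at least 1 − δ₁ − δ₂, simultaneously for all n > k: ‖μ̂_n(k) − μ‖ ≤ λ^{p−1}·(β·𝔠_p + K_p·2^{p−1})·(v + r₂^p) + β·log(2/δ₁)/(λ·(n−k)). -/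
open MeasureTheory
open scoped Classical

/-- `truncB x = min(1, ‖x‖)/‖x‖` for `x ≠ 0`, and `truncB 0 = 1`; so `truncB x • x` is the
projection of `x` onto the closed unit ball. -/
noncomputable def truncB {B : Type*} [NormedAddCommGroup B] (x : B) : ℝ :=
  if x = 0 then 1 else min 1 ‖x‖ / ‖x‖

/-- `K_p = (1/p) ((p-1)/p)^{p-1}`. -/
noncomputable def Kp (p : ℝ) : ℝ := (1 / p) * ((p - 1) / p) ^ (p - 1)

/-- `𝔠_p(ρ) = 2^{p+1} (e^{2ρ} - 2ρ - 1)/(2ρ)²`. -/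
noncomputable def frakC (p ρ : ℝ) : ℝ :=
  2 ^ (p + 1) * (Real.exp (2 * ρ) - 2 * ρ - 1) / (2 * ρ) ^ 2


section helpers
open Filter Topology

lemma aux_pow {u w U W : ℝ} (hu : 0 ≤ u) (hw : 0 ≤ w) (hW : 0 ≤ W) (huU : u ≤ U) (hwU : w ≤ U)
    (hs : u + w ≤ U + W) (n : ℕ) : u ^ n + w ^ n ≤ U ^ n + W ^ n := by
  rcases le_total w W with h | h
  · exact add_le_add (pow_le_pow_left₀ hu huU n) (pow_le_pow_left₀ hw h n)
  rcases le_total u W with h' | h'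
  · rw [add_comm]
    exact add_le_add (pow_le_pow_left₀ hw hwU n) (pow_le_pow_left₀ hu h' n)
  rcases eq_or_lt_of_le (h.trans hwU) with e | e
  · have h1 : u ≤ W := by linarith
    rw [add_comm]
    exact add_le_add (pow_le_pow_left₀ hw hwU n) (pow_le_pow_left₀ hu h1 n)
  have hU : 0 ≤ U := hu.trans huU
  set t := (u - W) / (U - W) with ht
  have hd : 0 < U - W := by linarith
  have ht0 : 0 ≤ t := div_nonneg (by linarith) hd.le
  have ht1 : t ≤ 1 := by rw [ht, div_le_one hd]; linarith
  have htd : t * (U - W) = u - W := by rw [ht]; field_simp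
  have hw' : w ≤ (1 - t) * U + t * W := by nlinarith
  have c := convexOn_pow (𝕜 := ℝ) n
  have c1 := c.2 (x := U) hU (y := W) hW ht0 (by linarith : 0 ≤ 1 - t) (by ring)
  have c2 := c.2 (x := U) hU (y := W) hW (by linarith : 0 ≤ 1 - t) ht0 (by ring)
  simp only [smul_eq_mul] at c1 c2
  have e1 : t * U + (1 - t) * W = u := by nlinarith
  rw [e1] at c1
  have := pow_le_pow_left₀ hw hw' n
  linarith

lemma aux_cosh {A C r b : ℝ} (hA : 0 ≤ A) (hC : 0 ≤ C)
    (hs : A ^ 2 + C ^ 2 ≤ 2 * r ^ 2 + 2 * b ^ 2) (hA' : A ≤ r + b) (hC' : C ≤ r + b) :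
    Real.cosh A + Real.cosh C ≤ 2 * (Real.cosh r * Real.cosh b) := by
  have e : 2 * (Real.cosh r * Real.cosh b) = Real.cosh (r + b) + Real.cosh (r - b) := by
    rw [Real.cosh_add, Real.cosh_sub]; ring
  rw [e]
  refine hasSum_le (fun n => ?_) ((Real.hasSum_cosh A).add (Real.hasSum_cosh C))
    ((Real.hasSum_cosh (r + b)).add (Real.hasSum_cosh (r - b)))
  rw [← add_div, ← add_div]
  gcongr ?_ / _
  simp only [pow_mul]
  apply aux_pow (by positivity) (by positivity) (by positivity) _ _ (by nlinarith)
  · gcongr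
  · gcongr

lemma aux_exp_slope (c : ℝ) (t : ℕ → ℝ) (ht : ∀ n, t n ≠ 0) (h0 : Tendsto t atTop (𝓝 0)) :
    Tendsto (fun n => (Real.exp (c * t n) - 1) / t n) atTop (𝓝 c) := by
  have h : HasDerivAt (fun x : ℝ => Real.exp (c * x)) c 0 := by
    have := ((hasDerivAt_id (0 : ℝ)).const_mul c).exp
    simpa using this
  have h1 := hasDerivAt_iff_tendsto_slope.1 h
  have h2 : Tendsto t atTop (𝓝[≠] 0) :=
    tendsto_nhdsWithin_iff.2 ⟨h0, Eventually.of_forall (by simpa using ht)⟩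
  refine (h1.comp h2).congr fun n => ?_
  simp [slope_def_field]

section
variable {B : Type*} [NormedAddCommGroup B] [NormedSpace ℝ B]

lemma aux_second (β : ℝ) (hβ : 1 ≤ β)
    (hsmooth : ∀ x y : B, ‖x + y‖ ^ 2 + ‖x - y‖ ^ 2 ≤ 2 * ‖x‖ ^ 2 + 2 * β ^ 2 * ‖y‖ ^ 2)
    (x y : B) : Real.cosh ‖x + y‖ + Real.cosh ‖x - y‖ ≤
      2 * (Real.cosh ‖x‖ * Real.cosh (β * ‖y‖)) := by
  have hb : ‖y‖ ≤ β * ‖y‖ := le_mul_of_one_le_left (norm_nonneg _) hβ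
  apply aux_cosh (norm_nonneg _) (norm_nonneg _)
  · have := hsmooth x y; nlinarith
  · exact (norm_add_le _ _).trans (by linarith)
  · exact (norm_sub_le _ _).trans (by linarith)

lemma aux_tangent (x y : ℝ) : Real.cosh x + Real.sinh x * (y - x) ≤ Real.cosh y := by
  rw [Real.cosh_eq, Real.sinh_eq, Real.cosh_eq]
  have h1 : Real.exp x * (1 + (y - x)) ≤ Real.exp y := by
    have : Real.exp y = Real.exp x * Real.exp (y - x) := by rw [← Real.exp_add]; ring_nf
    rw [this]; gcongr; linarith [Real.add_one_le_exp (y - x)]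
  have h2 : Real.exp (-x) * (1 - (y - x)) ≤ Real.exp (-y) := by
    have : Real.exp (-y) = Real.exp (-x) * Real.exp (-(y - x)) := by rw [← Real.exp_add]; ring_nf
    rw [this]; gcongr; linarith [Real.add_one_le_exp (-(y - x))]
  linarith

lemma aux_cosh_add_le (x : ℝ) {y : ℝ} (hy : 0 ≤ y) :
    Real.cosh (x + y) ≤ Real.exp y * Real.cosh x := by
  rw [Real.cosh_eq, Real.cosh_eq]
  have h1 : Real.exp (x + y) = Real.exp y * Real.exp x := by rw [← Real.exp_add]; ring_nf
  have h2 : Real.exp (-(x + y)) ≤ Real.exp y * Real.exp (-x) := by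
    rw [← Real.exp_add]; gcongr; linarith
  linarith

lemma aux_subgrad (s : B) : ∃ ℓ : B →L[ℝ] ℝ, ∀ d, Real.cosh ‖s‖ + ℓ d ≤ Real.cosh ‖s + d‖ := by
  obtain ⟨g, hg, hgs⟩ := exists_dual_vector'' ℝ s
  refine ⟨Real.sinh ‖s‖ • g, fun d => ?_⟩
  have h1 := aux_tangent ‖s‖ (‖s‖ + g d)
  have h2 : |‖s‖ + g d| ≤ ‖s + d‖ := by
    have e : ‖s‖ + g d = g (s + d) := by rw [map_add, hgs]; simp
    rw [e]
    have := g.le_opNorm (s + d)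
    rw [Real.norm_eq_abs] at this
    exact this.trans (mul_le_of_le_one_left (norm_nonneg _) hg)
  have h3 : Real.cosh (‖s‖ + g d) ≤ Real.cosh ‖s + d‖ := by
    rw [Real.cosh_le_cosh, abs_of_nonneg (norm_nonneg (s + d))]; exact h2
  simp only [smul_apply, smul_eq_mul]
  simp only [add_sub_cancel_left] at h1
  linarith

/-- discrete double summation -/
lemma aux_discrete (g : ℕ → ℝ) (K q : ℝ) (hq : 1 < q) (h0 : g 0 = 0) (h1 : g 1 ≤ K)
    (hstep : ∀ i, g (i + 2) - g (i + 1) ≤ g (i + 1) - g i + K * q ^ (i + 1)) (n : ℕ) :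
    g n ≤ K / (q - 1) * (q * (q ^ n - 1) / (q - 1) - n) := by
  have hq1 : 0 < q - 1 := by linarith
  have inc : ∀ i, g (i + 1) - g i ≤ K * (q ^ (i + 1) - 1) / (q - 1) := by
    intro i
    induction i with
    | zero => simp [h0]; rw [mul_div_assoc, div_self hq1.ne']; simpa using h1
    | succ i ih =>
      refine (hstep i).trans ?_
      refine (add_le_add_left ih _).trans (le_of_eq ?_)
      field_simp
      ring
  induction n with
  | zero => simp [h0]
  | succ n ih =>
    have := add_le_add ih (inc n)
    refine (by linarith : g (n + 1) ≤ _).trans (this.trans (le_of_eq ?_))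
    field_simp
    push_cast
    ring

lemma aux_key (β : ℝ) (hβ : 1 ≤ β)
    (hsmooth : ∀ x y : B, ‖x + y‖ ^ 2 + ‖x - y‖ ^ 2 ≤ 2 * ‖x‖ ^ 2 + 2 * β ^ 2 * ‖y‖ ^ 2)
    (s : B) : ∃ ℓ : B →L[ℝ] ℝ, ∀ d, Real.cosh ‖s + d‖ ≤ Real.cosh ‖s‖ + ℓ d
      + β ^ 2 * (Real.exp ‖d‖ - 1 - ‖d‖) * Real.cosh ‖s‖ := by
  obtain ⟨ℓ, hℓ⟩ := aux_subgrad s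
  refine ⟨ℓ, fun d => ?_⟩
  rcases eq_or_ne d 0 with rfl | hd
  · simp
  have ha : 0 < ‖d‖ := norm_pos_iff.2 hd
  set a := ‖d‖ with ha_def
  have hF : 0 < Real.cosh ‖s‖ := Real.cosh_pos _
  set F := Real.cosh ‖s‖ with hFdef
  set t : ℕ → ℝ := fun n => 1 / ((n : ℝ) + 1) with ht
  have htpos : ∀ n, 0 < t n := fun n => by simp only [ht]; positivity
  have htlim : Tendsto t atTop (𝓝 0) := tendsto_one_div_add_atTop_nhds_zero_nat
  have main : ∀ N : ℕ, Real.cosh ‖s + d‖ - F - ℓ d ≤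
      F * (2 * ((Real.exp ((β ^ 2 * a ^ 2 / 2) * (t N) ^ 2) - 1) / (t N) ^ 2)) *
        (Real.exp (a * t N) * (Real.exp a - 1) / ((Real.exp (a * t N) - 1) / t N) ^ 2
          - 1 / ((Real.exp (a * t N) - 1) / t N)) := by
    intro N
    set h := t N with hh
    have hpos : 0 < h := htpos N
    set K := 2 * (Real.exp ((β ^ 2 * a ^ 2 / 2) * h ^ 2) - 1) * F with hK
    set q := Real.exp (a * h) with hqdef
    have hq : 1 < q := Real.one_lt_exp_iff.2 (by positivity)
    have hC : 2 * (Real.cosh (β * ‖h • d‖) - 1) ≤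
        2 * (Real.exp ((β ^ 2 * a ^ 2 / 2) * h ^ 2) - 1) := by
      have := Real.cosh_le_exp_half_sq (β * ‖h • d‖)
      rw [norm_smul, Real.norm_eq_abs, abs_of_pos hpos, ← ha_def] at this ⊢
      have e : (β * (h * a)) ^ 2 / 2 = (β ^ 2 * a ^ 2 / 2) * h ^ 2 := by ring
      rw [e] at this
      linarith
    have hC0 : 0 ≤ 2 * (Real.cosh (β * ‖h • d‖) - 1) := by
      linarith [Real.one_le_cosh (β * ‖h • d‖)]
    set g : ℕ → ℝ := fun i => Real.cosh ‖s + ((i : ℝ) * h) • d‖ - F - (i : ℝ) * h * ℓ d with hg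
    have g0 : g 0 = 0 := by simp [hg, hFdef]
    have g1 : g 1 ≤ K := by
      have h1 := aux_second β hβ hsmooth s (h • d)
      have h2 := hℓ (-(h • d))
      simp only [hg, Nat.cast_one, one_mul, hK]
      rw [map_neg, map_smul, smul_eq_mul, ← sub_eq_add_neg, ← sub_eq_add_neg] at h2
      rw [← hFdef] at h1
      nlinarith [mul_le_mul_of_nonneg_right hC hF.le]
    have gs : ∀ i, g (i + 2) - g (i + 1) ≤ g (i + 1) - g i + K * q ^ (i + 1) := by
      intro i
      have h1 := aux_second β hβ hsmooth (s + (((i + 1 : ℕ) : ℝ) * h) • d) (h • d)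
      have e1 : s + (((i + 1 : ℕ) : ℝ) * h) • d + h • d = s + (((i + 2 : ℕ) : ℝ) * h) • d := by
        push_cast; module
      have e2 : s + (((i + 1 : ℕ) : ℝ) * h) • d - h • d = s + (((i : ℕ) : ℝ) * h) • d := by
        push_cast; module
      rw [e1, e2] at h1
      have h2 : Real.cosh ‖s + (((i + 1 : ℕ) : ℝ) * h) • d‖ ≤ q ^ (i + 1) * F := by
        have n1 : ‖s + (((i + 1 : ℕ) : ℝ) * h) • d‖ ≤ ‖s‖ + ((i + 1 : ℕ) : ℝ) * h * a := by
          refine (norm_add_le _ _).trans ?_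
          rw [norm_smul, Real.norm_eq_abs, abs_of_nonneg (by positivity)]
        have n2 : Real.cosh ‖s + (((i + 1 : ℕ) : ℝ) * h) • d‖ ≤
            Real.cosh (‖s‖ + ((i + 1 : ℕ) : ℝ) * h * a) := by
          rw [Real.cosh_le_cosh, abs_of_nonneg (norm_nonneg _)]
          exact n1.trans (le_abs_self _)
        refine n2.trans ((aux_cosh_add_le _ (by positivity)).trans (le_of_eq ?_))
        rw [hqdef, ← Real.exp_nat_mul, hFdef]
        ring_nf
      have h3 : 2 * (Real.cosh (β * ‖h • d‖) - 1) * Real.cosh ‖s + (((i + 1 : ℕ) : ℝ) * h) • d‖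
          ≤ K * q ^ (i + 1) := by
        refine (mul_le_mul hC h2 (Real.cosh_pos _).le (hC0.trans hC)).trans (le_of_eq ?_)
        rw [hK]; ring
      simp only [hg]
      push_cast at h1 h3 ⊢
      nlinarith
    have := aux_discrete g K q hq g0 g1 gs (N + 1)
    have hNh : ((N + 1 : ℕ) : ℝ) * h = 1 := by
      simp only [hh, ht]; push_cast; field_simp
    have egN : g (N + 1) = Real.cosh ‖s + d‖ - F - ℓ d := by
      simp only [hg, hNh, one_smul, one_mul]
    have eqN : q ^ (N + 1) = Real.exp a := by
      rw [hqdef, ← Real.exp_nat_mul, mul_comm a h, ← mul_assoc, hNh, one_mul]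
    rw [egN, eqN] at this
    refine this.trans (le_of_eq ?_)
    have hn : ((N + 1 : ℕ) : ℝ) = 1 / h := by field_simp; linarith
    rw [hn, hK]
    have : q - 1 ≠ 0 := by linarith
    field_simp
  have l1 := aux_exp_slope (β ^ 2 * a ^ 2 / 2) (fun n => t n ^ 2)
    (fun n => (pow_pos (htpos n) 2).ne') (by simpa using htlim.pow 2)
  have l2 := aux_exp_slope a t (fun n => (htpos n).ne') htlim
  have l3 : Tendsto (fun n => Real.exp (a * t n)) atTop (𝓝 1) := by
    have := (Real.continuous_exp.tendsto _).comp (htlim.const_mul a)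
    rw [mul_zero, Real.exp_zero] at this
    exact this
  have lim := ((l1.const_mul 2).const_mul F).mul
    (((l3.mul_const (Real.exp a - 1)).div (l2.pow 2) (by positivity)).sub
      ((tendsto_const_nhds (x := (1 : ℝ))).div l2 ha.ne'))
  have := ge_of_tendsto' lim main
  have e : F * (2 * (β ^ 2 * a ^ 2 / 2)) * (1 * (Real.exp a - 1) / a ^ 2 - 1 / a) =
    β ^ 2 * (Real.exp a - 1 - a) * F := by
    field_simp
  rw [e] at this
  linarith
end


lemma aux_ville {Ω : Type*} {mΩ : MeasurableSpace Ω} {P : Measure Ω} [IsProbabilityMeasure P]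
    (G : ℕ → MeasurableSpace Ω) (hG : ∀ n, G n ≤ mΩ) (hmono : Monotone G) (M : ℕ → Ω → ℝ)
    (hM0 : ∀ n ω, 0 ≤ M n ω) (hMm : ∀ n, Measurable[G n] (M n)) (hMi : ∀ n, Integrable (M n) P)
    (hsup : ∀ n A, MeasurableSet[G n] A → ∫ ω in A, M (n + 1) ω ∂P ≤ ∫ ω in A, M n ω ∂P)
    (h0 : ∫ ω, M 0 ω ∂P ≤ 1) (a : ℝ) (ha : 0 < a) :
    P {ω | ∃ n, a ≤ M n ω} ≤ ENNReal.ofReal (1 / a) := by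
  set Bs : ℕ → Set Ω := fun n => {ω | ∀ j < n, M j ω < a} with hB
  have hBsucc : ∀ n, Bs (n + 1) = Bs n ∩ {ω | M n ω < a} := by
    intro n; ext ω
    simp only [hB, Set.mem_ofPred_eq, Set.mem_inter_iff, Nat.lt_succ_iff_lt_or_eq]
    constructor
    · intro h; exact ⟨fun j hj => h j (Or.inl hj), h n (Or.inr rfl)⟩
    · rintro ⟨h1, h2⟩ j (hj | rfl)
      · exact h1 j hj
      · exact h2
  have hlt : ∀ n, MeasurableSet[G n] {ω | M n ω < a} := fun n =>
    (hMm n) measurableSet_Iio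
  have hBm' : ∀ n, MeasurableSet[G n] (Bs (n + 1)) := by
    intro n
    induction n with
    | zero =>
      rw [hBsucc]
      refine MeasurableSet.inter ?_ (hlt 0)
      have : Bs 0 = Set.univ := by ext; simp [hB]
      rw [this]; exact MeasurableSet.univ
    | succ n ih =>
      rw [hBsucc]
      exact (hmono (Nat.le_succ n) _ ih).inter (hlt _)
  have hBm : ∀ n, MeasurableSet (Bs n) := by
    intro n
    cases n with
    | zero =>
      have : Bs 0 = Set.univ := by ext; simp [hB]
      rw [this]; exact MeasurableSet.univ
    | succ n => exact hG n _ (hBm' n)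
  have claim : ∀ n, ∫ ω in Bs n, M n ω ∂P + a * P.real (Bs n)ᶜ ≤ 1 := by
    intro n
    induction n with
    | zero =>
      have : Bs 0 = Set.univ := by ext; simp [hB]
      simpa [this] using h0
    | succ n ih =>
      refine le_trans ?_ ih
      have hs := hsup n _ (hBm' n)
      have hsub : Bs (n + 1) ⊆ Bs n := by rw [hBsucc]; exact Set.inter_subset_left
      have hd : MeasurableSet (Bs n \ Bs (n + 1)) := (hBm n).diff (hBm (n + 1))
      have e1 : ∫ ω in Bs n, M n ω ∂P = ∫ ω in Bs (n + 1), M n ω ∂P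
          + ∫ ω in Bs n \ Bs (n + 1), M n ω ∂P := by
        rw [← setIntegral_union Set.disjoint_sdiff_right hd
          (hMi n).integrableOn (hMi n).integrableOn, Set.union_sdiff_cancel hsub]
      have e2 : a * P.real (Bs n \ Bs (n + 1)) ≤ ∫ ω in Bs n \ Bs (n + 1), M n ω ∂P := by
        have := setIntegral_mono_on (μ := P) (f := fun _ => a) (g := M n)
          (integrable_const a).integrableOn (hMi n).integrableOn hd (by
            intro ω hω
            rw [hBsucc] at hω
            by_contra hc
            exact hω.2 ⟨hω.1, not_le.1 hc⟩)
        rw [setIntegral_const, smul_eq_mul] at this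
        linarith
      have e3 : P.real (Bs (n + 1))ᶜ = P.real (Bs n)ᶜ + P.real (Bs n \ Bs (n + 1)) := by
        rw [← measureReal_union _ hd]
        · congr 1
          ext ω
          have := @hsub ω
          simp only [Set.mem_compl_iff, Set.mem_union, Set.mem_sdiff]
          tauto
        · rw [Set.disjoint_left]; intro ω h1 h2; exact h1 h2.1
      rw [e3]
      linarith
  have hset : {ω | ∃ n, a ≤ M n ω} = ⋃ n, (Bs n)ᶜ := by
    ext ω
    simp only [hB, Set.mem_ofPred_eq, Set.mem_iUnion, Set.mem_compl_iff, not_forall, not_lt]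
    constructor
    · rintro ⟨n, hn⟩; exact ⟨n + 1, n, Nat.lt_succ_self n, hn⟩
    · rintro ⟨_, j, _, h⟩; exact ⟨j, h⟩
  have hmonoB : Monotone fun n => (Bs n)ᶜ := by
    intro i j hij
    apply Set.compl_subset_compl.2
    intro ω h l hl
    exact h l (hl.trans_le hij)
  rw [hset, hmonoB.measure_iUnion]
  refine iSup_le fun n => ?_
  rw [← ofReal_measureReal]
  apply ENNReal.ofReal_le_ofReal
  rw [le_div_iff₀ ha]
  have h1 := claim n
  have h2 : 0 ≤ ∫ ω in Bs n, M n ω ∂P := integral_nonneg (hM0 n)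
  linarith

section
variable {B : Type*} [NormedAddCommGroup B] [NormedSpace ℝ B] [CompleteSpace B]

lemma aux_step {Ω : Type*} {m mΩ : MeasurableSpace Ω} {P : Measure Ω} [IsProbabilityMeasure P]
    (hm : m ≤ mΩ) (β : ℝ) (hβ : 1 ≤ β)
    (hsmooth : ∀ x y : B, ‖x + y‖ ^ 2 + ‖x - y‖ ^ 2 ≤ 2 * ‖x‖ ^ 2 + 2 * β ^ 2 * ‖y‖ ^ 2)
    (S D : Ω → B) (hS : StronglyMeasurable[m] S) (hD : StronglyMeasurable D)
    (c b ε : ℝ) (hSc : ∀ ω, ‖S ω‖ ≤ c) (hc : 0 ≤ c) (hDb : ∀ ω, ‖D ω‖ ≤ b)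
    (hD0 : ∀ A, MeasurableSet[m] A → ∫ ω in A, D ω ∂P = 0)
    (hψ : ∀ A, MeasurableSet[m] A →
      ∫ ω in A, β ^ 2 * (Real.exp ‖D ω‖ - 1 - ‖D ω‖) ∂P ≤ ε * P.real A)
    (A : Set Ω) (hA : MeasurableSet[m] A) :
    ∫ ω in A, Real.cosh ‖S ω + D ω‖ ∂P ≤ (1 + ε) * ∫ ω in A, Real.cosh ‖S ω‖ ∂P := by
  have hFc : Continuous fun x : B => Real.cosh ‖x‖ := Real.continuous_cosh.comp continuous_norm
  have hbd : ∀ (x : B) (r : ℝ), ‖x‖ ≤ r → ‖Real.cosh ‖x‖‖ ≤ Real.cosh r := by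
    intro x r h
    rw [Real.norm_eq_abs, abs_of_pos (Real.cosh_pos _), Real.cosh_le_cosh,
      abs_of_nonneg (norm_nonneg x)]
    exact h.trans (le_abs_self _)
  have hDi : Integrable D P := Integrable.of_bound hD.aestronglyMeasurable b
    (Eventually.of_forall hDb)
  have hDψi : Integrable (fun ω => β ^ 2 * (Real.exp ‖D ω‖ - 1 - ‖D ω‖)) P := by
    apply Integrable.const_mul
    refine Integrable.sub (Integrable.sub ?_ (integrable_const _)) hDi.norm
    refine Integrable.of_bound (Real.continuous_exp.comp_stronglyMeasurable
      hD.norm).aestronglyMeasurable (Real.exp b) (Eventually.of_forall fun ω => ?_)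
    rw [Real.norm_eq_abs, abs_of_pos (Real.exp_pos _)]
    exact Real.exp_le_exp.2 (hDb ω)
  -- simple case
  have simple : ∀ f : @SimpleFunc Ω m B, (∀ ω, ‖f ω‖ ≤ c) →
      ∫ ω in A, Real.cosh ‖f ω + D ω‖ ∂P ≤ (1 + ε) * ∫ ω in A, Real.cosh ‖f ω‖ ∂P := by
    intro f hf
    have hfm : StronglyMeasurable f := (@SimpleFunc.stronglyMeasurable _ _ m _ f).mono hm
    have i1 : Integrable (fun ω => Real.cosh ‖f ω + D ω‖) P :=
      Integrable.of_bound (hFc.comp_stronglyMeasurable (hfm.add hD)).aestronglyMeasurable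
        (Real.cosh (c + b)) (Eventually.of_forall fun ω =>
          hbd _ _ ((norm_add_le _ _).trans (add_le_add (hf ω) (hDb ω))))
    have i2 : Integrable (fun ω => Real.cosh ‖f ω‖) P :=
      Integrable.of_bound (hFc.comp_stronglyMeasurable hfm).aestronglyMeasurable
        (Real.cosh c) (Eventually.of_forall fun ω => hbd _ _ (hf ω))
    have hmeas : ∀ y, MeasurableSet[m] (A ∩ f ⁻¹' {y}) := fun y =>
      hA.inter (@SimpleFunc.measurableSet_fiber _ _ m f y)
    obtain ⟨R, hR⟩ : ∃ R : Finset B, ∀ ω, f ω ∈ R :=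
      ⟨@SimpleFunc.range Ω B m f, fun ω => @SimpleFunc.mem_range_self Ω B m f ω⟩
    have hAeq : A = ⋃ y ∈ R, A ∩ f ⁻¹' {y} := by
      ext ω
      simp [hR]
    have hdisj : Set.Pairwise (↑R : Set B) (Function.onFun Disjoint fun y => A ∩ f ⁻¹' {y}) := by
      intro y _ z _ hyz
      rw [Function.onFun, Set.disjoint_left]
      rintro ω ⟨_, h1⟩ ⟨_, h2⟩
      exact hyz (h1.symm.trans h2)
    have part : ∀ g : Ω → ℝ, Integrable g P → ∫ ω in A, g ω ∂P =
        ∑ y ∈ R, ∫ ω in A ∩ f ⁻¹' {y}, g ω ∂P := by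
      intro g hg
      conv_lhs => rw [hAeq]
      exact integral_biUnion_finset _ (fun y _ => hm _ (hmeas y)) hdisj
        (fun y _ => hg.integrableOn)
    rw [part _ i1, part _ i2, Finset.mul_sum]
    refine Finset.sum_le_sum fun y _ => ?_
    have hE := hmeas y
    set E := A ∩ f ⁻¹' {y} with hEdef
    have hE' := hm _ hE
    have c1 : ∫ ω in E, Real.cosh ‖f ω + D ω‖ ∂P = ∫ ω in E, Real.cosh ‖y + D ω‖ ∂P :=
      setIntegral_congr_fun hE' fun ω hω => by
        have : f ω = y := hω.2
        simp only [this]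
    have c2 : ∫ ω in E, Real.cosh ‖f ω‖ ∂P = P.real E * Real.cosh ‖y‖ := by
      rw [setIntegral_congr_fun (g := fun _ => Real.cosh ‖y‖) hE' fun ω hω => by
        have : f ω = y := hω.2
        simp only [this]]
      rw [setIntegral_const, smul_eq_mul]
    rw [c1, c2]
    obtain ⟨ℓ, hℓ⟩ := aux_key β hβ hsmooth y
    have i3 : Integrable (fun ω => Real.cosh ‖y + D ω‖) P :=
      Integrable.of_bound (hFc.comp_stronglyMeasurable
        (stronglyMeasurable_const.add hD)).aestronglyMeasurable
        (Real.cosh (‖y‖ + b)) (Eventually.of_forall fun ω =>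
          hbd _ _ ((norm_add_le _ _).trans (add_le_add le_rfl (hDb ω))))
    have i4 : Integrable (fun ω => ℓ (D ω)) P := ℓ.integrable_comp hDi
    have i5 : Integrable (fun ω => Real.cosh ‖y‖ + ℓ (D ω)) P := (integrable_const _).add i4
    have := setIntegral_mono (μ := P) (s := E) i3.integrableOn
      (((integrable_const (Real.cosh ‖y‖)).add i4).add
        (hDψi.mul_const (Real.cosh ‖y‖))).integrableOn (fun ω => hℓ (D ω))
    refine this.trans ?_
    have e1 : ∫ ω in E, ((Real.cosh ‖y‖ + ℓ (D ω)) +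
        β ^ 2 * (Real.exp ‖D ω‖ - 1 - ‖D ω‖) * Real.cosh ‖y‖) ∂P
        = P.real E * Real.cosh ‖y‖ + 0 +
          (∫ ω in E, β ^ 2 * (Real.exp ‖D ω‖ - 1 - ‖D ω‖) ∂P) * Real.cosh ‖y‖ := by
      rw [integral_add i5.integrableOn
        ((hDψi.mul_const _).integrableOn),
        integral_add (integrable_const _).integrableOn i4.integrableOn, setIntegral_const,
        smul_eq_mul, integral_mul_const, ℓ.integral_comp_comm hDi.integrableOn, hD0 E hE, map_zero]
    refine (le_of_eq e1).trans ?_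
    have h3 := mul_le_mul_of_nonneg_right (hψ E hE) (Real.cosh_pos ‖y‖).le
    linarith
  have hconv := fun ω => hS.tendsto_approxBounded_of_norm_le (hSc ω)
  have hfm : ∀ n, StronglyMeasurable (hS.approxBounded c n) :=
    fun n => (@SimpleFunc.stronglyMeasurable _ _ m _ (hS.approxBounded c n)).mono hm
  have hfb := hS.norm_approxBounded_le hc
  have l1 : Tendsto (fun n => ∫ ω in A, Real.cosh ‖hS.approxBounded c n ω + D ω‖ ∂P) atTop
      (𝓝 (∫ ω in A, Real.cosh ‖S ω + D ω‖ ∂P)) := by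
    refine tendsto_integral_of_dominated_convergence (fun _ => Real.cosh (c + b))
      (fun n => (hFc.comp_stronglyMeasurable ((hfm n).add hD)).aestronglyMeasurable)
      (integrable_const _) (fun n => Eventually.of_forall fun ω => hbd _ _
        ((norm_add_le _ _).trans (add_le_add (hfb n ω) (hDb ω)))) (Eventually.of_forall fun ω => ?_)
    exact (hFc.tendsto _).comp ((hconv ω).add_const (D ω))
  have l2 : Tendsto (fun n => ∫ ω in A, Real.cosh ‖hS.approxBounded c n ω‖ ∂P) atTop
      (𝓝 (∫ ω in A, Real.cosh ‖S ω‖ ∂P)) := by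
    refine tendsto_integral_of_dominated_convergence (fun _ => Real.cosh c)
      (fun n => (hFc.comp_stronglyMeasurable (hfm n)).aestronglyMeasurable)
      (integrable_const _) (fun n => Eventually.of_forall fun ω => hbd _ _ (hfb n ω))
      (Eventually.of_forall fun ω => ?_)
    exact (hFc.tendsto _).comp (hconv ω)
  exact le_of_tendsto_of_tendsto' l1 (l2.const_mul (1 + ε)) (fun n => simple _ (hfb n))
end


lemma aux_rpow_add (a b : ℝ) {p : ℝ} (ha : 0 ≤ a) (hb : 0 ≤ b) (hp : 1 ≤ p) :
    (a + b) ^ p ≤ 2 ^ (p - 1) * (a ^ p + b ^ p) := by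
  have := NNReal.rpow_add_le_mul_rpow_add_rpow ⟨a, ha⟩ ⟨b, hb⟩ hp
  exact_mod_cast this

lemma aux_truncB {B : Type*} [NormedAddCommGroup B] (x : B) : truncB x = (max 1 ‖x‖)⁻¹ := by
  unfold truncB
  split_ifs with h
  · simp [h]
  · have : 0 < ‖x‖ := norm_pos_iff.2 h
    rcases le_total 1 ‖x‖ with h1 | h1
    · rw [min_eq_left h1, max_eq_right h1, one_div]
    · rw [min_eq_right h1, max_eq_left h1, div_self this.ne', inv_one]

lemma aux_Kp_nonneg {p : ℝ} (hp : 1 < p) : 0 ≤ Kp p := by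
  unfold Kp
  have : 0 < p - 1 := by linarith
  positivity

lemma aux_Kp {p t : ℝ} (hp : 1 < p) (ht : 0 ≤ t) : t - 1 ≤ Kp p * t ^ p := by
  have hp1 : 0 < p - 1 := by linarith
  have hp0 : 0 < p := by linarith
  set u := t * ((p - 1) / p) with hu
  have hu0 : 0 ≤ u := by positivity
  have hb := one_add_mul_self_le_rpow_one_add (s := u - 1) (p := p) (by linarith) hp.le
  rw [add_sub_cancel] at hb
  have e : Kp p * t ^ p = u ^ p / (p - 1) := by
    rw [hu, Real.mul_rpow ht (by positivity)]
    have : ((p - 1) / p) ^ p = ((p - 1) / p) ^ (p - 1) * ((p - 1) / p) := by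
      rw [← Real.rpow_add_one (by positivity)]; ring_nf
    rw [this]
    unfold Kp
    field_simp
  rw [e, le_div_iff₀ hp1]
  refine le_trans (le_of_eq ?_) hb
  rw [hu]; field_simp; ring

lemma aux_psi {x y : ℝ} (hx : 0 ≤ x) (hxy : x ≤ y) (hy : 0 < y) :
    Real.exp x - 1 - x ≤ x ^ 2 * ((Real.exp y - y - 1) / y ^ 2) := by
  have hs : ∀ z : ℝ, HasSum (fun n : ℕ => z ^ (n + 2) / (n + 2).factorial)
      (Real.exp z - 1 - z) := by
    intro z
    have h := NormedSpace.expSeries_div_hasSum_exp (𝔸 := ℝ) z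
    rw [← Real.exp_eq_exp_ℝ] at h
    have := (hasSum_nat_add_iff' 2).2 h
    simpa [Finset.sum_range_succ, sub_sub] using this
  have h2 := (hs y).mul_left (x ^ 2 / y ^ 2)
  refine (hasSum_le (fun n => ?_) (hs x) h2).trans (le_of_eq (by ring))
  have : x ^ 2 / y ^ 2 * (y ^ (n + 2) / ((n + 2).factorial : ℝ))
      = x ^ 2 * y ^ n / ((n + 2).factorial : ℝ) := by
    field_simp; try ring
  rw [this, pow_add, mul_comm]
  gcongr

section
variable {B : Type*} [NormedAddCommGroup B] [NormedSpace ℝ B]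

lemma aux_Y (lam : ℝ) (hlam : 0 < lam) (w : B) :
    ‖truncB (lam • w) • w‖ ≤ 1 / lam ∧ ‖truncB (lam • w) • w‖ ≤ ‖w‖ ∧
    ∀ p : ℝ, 1 < p → ‖truncB (lam • w) • w - w‖ ≤ Kp p * lam ^ (p - 1) * ‖w‖ ^ p := by
  rw [aux_truncB, norm_smul lam w, Real.norm_eq_abs, abs_of_pos hlam]
  have hm : 0 < max 1 (lam * ‖w‖) := lt_max_of_lt_left one_pos
  refine ⟨?_, ?_, ?_⟩
  · rw [norm_smul, norm_inv, Real.norm_eq_abs, abs_of_pos hm, inv_mul_le_iff₀ hm]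
    rw [mul_one_div, le_div_iff₀ hlam, mul_comm]
    exact le_max_right _ _
  · rw [norm_smul, norm_inv, Real.norm_eq_abs, abs_of_pos hm, inv_mul_le_iff₀ hm]
    exact le_mul_of_one_le_left (norm_nonneg _) (le_max_left _ _)
  · intro p hp
    have hK := aux_Kp_nonneg hp
    rcases le_total (lam * ‖w‖) 1 with h | h
    · rw [max_eq_left h]
      simp only [inv_one, one_smul, sub_self, norm_zero]
      positivity
    · rw [max_eq_right h]
      have hw : 0 < ‖w‖ := by
        rcases (norm_nonneg w).eq_or_lt with h' | h'
        · rw [← h'] at h; simp at h; linarith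
        · exact h'
      have e : (lam * ‖w‖)⁻¹ • w - w = ((lam * ‖w‖)⁻¹ - 1) • w := by module
      rw [e, norm_smul, Real.norm_eq_abs, abs_of_nonpos (by
        have := inv_le_one_of_one_le₀ h; linarith)]
      have h1 := aux_Kp (t := lam * ‖w‖) hp (by positivity)
      rw [Real.mul_rpow hlam.le hw.le] at h1
      have e2 : lam ^ p = lam ^ (p - 1) * lam := by
        rw [← Real.rpow_add_one hlam.ne']; ring_nf
      rw [e2] at h1
      have e3 : -((lam * ‖w‖)⁻¹ - 1) * ‖w‖ = (lam * ‖w‖ - 1) / lam := by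
        field_simp; ring
      rw [e3, div_le_iff₀ hlam]
      linarith

variable [CompleteSpace B]

lemma aux_stepdata {Ω : Type*} {m mΩ : MeasurableSpace Ω} {P : Measure Ω} [IsProbabilityMeasure P]
    (hm : m ≤ mΩ) (X Z : Ω → B) (μ : B) (p v r lam : ℝ) (hp1 : 1 < p) (hp2 : p ≤ 2)
    (hr : 0 ≤ r) (hlam : 0 < lam) (hX : StronglyMeasurable X) (hXi : Integrable X P)
    (hXp : Integrable (fun ω => ‖X ω - μ‖ ^ p) P)
    (hcm : P[X | m] =ᵐ[P] fun _ => μ)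
    (hcv : ∀ᵐ ω ∂P, (P[fun ω' => ‖X ω' - μ‖ ^ p | m]) ω ≤ v)
    (hZ : StronglyMeasurable[m] Z) (hZr : ∀ ω, ‖μ - Z ω‖ ≤ r) :
    ∃ M : Ω → B, StronglyMeasurable[m] M ∧ (∀ ω, ‖M ω‖ ≤ 1 / lam) ∧
      (∀ A, MeasurableSet[m] A →
        ∫ ω in A, (truncB (lam • (X ω - Z ω)) • (X ω - Z ω) - M ω) ∂P = 0) ∧
      (∀ A, MeasurableSet[m] A →
        ∫ ω in A, lam ^ 2 * ‖truncB (lam • (X ω - Z ω)) • (X ω - Z ω) - M ω‖ ^ 2 ∂P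
          ≤ lam ^ p * 2 ^ (p + 1) * (v + r ^ p) * P.real A) ∧
      (∀ᵐ ω ∂P, ‖M ω - (μ - Z ω)‖ ≤ lam ^ (p - 1) * Kp p * 2 ^ (p - 1) * (v + r ^ p)) := by
  have hp0 : 0 < p := by linarith
  have hZ' : StronglyMeasurable Z := hZ.mono hm
  set w : Ω → B := fun ω => X ω - Z ω with hw
  set Y : Ω → B := fun ω => truncB (lam • w ω) • w ω with hY
  have hwm : StronglyMeasurable w := hX.sub hZ'
  have hYm : StronglyMeasurable Y := by
    have hc : Continuous fun x : B => truncB (lam • x) • x := by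
      have : (fun x : B => truncB (lam • x) • x) = fun x => (max 1 ‖lam • x‖)⁻¹ • x := by
        funext x; rw [aux_truncB]
      rw [this]
      refine Continuous.smul (Continuous.inv₀ (by fun_prop) fun x => ?_) continuous_id
      exact (lt_max_of_lt_left one_pos).ne'
    exact hc.comp_stronglyMeasurable hwm
  have hY1 : ∀ ω, ‖Y ω‖ ≤ 1 / lam := fun ω => (aux_Y lam hlam (w ω)).1
  have hY2 : ∀ ω, ‖Y ω‖ ≤ ‖w ω‖ := fun ω => (aux_Y lam hlam (w ω)).2.1
  have hY3 : ∀ ω, ‖Y ω - w ω‖ ≤ Kp p * lam ^ (p - 1) * ‖w ω‖ ^ p :=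
    fun ω => (aux_Y lam hlam (w ω)).2.2 p hp1
  have hYi : Integrable Y P := Integrable.of_bound hYm.aestronglyMeasurable (1 / lam)
    (Eventually.of_forall hY1)
  have hZi : Integrable Z P := Integrable.of_bound hZ'.aestronglyMeasurable (‖μ‖ + r)
    (Eventually.of_forall fun ω => by
      have : Z ω = μ - (μ - Z ω) := by abel
      rw [this]; exact (norm_sub_le _ _).trans (by linarith [hZr ω]))
  have hwi : Integrable w P := hXi.sub hZi
  have hwp : ∀ ω, ‖w ω‖ ^ p ≤ 2 ^ (p - 1) * (‖X ω - μ‖ ^ p + r ^ p) := by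
    intro ω
    have h1 : ‖w ω‖ ≤ ‖X ω - μ‖ + r := by
      have : w ω = (X ω - μ) + (μ - Z ω) := by simp [hw]
      rw [this]; exact (norm_add_le _ _).trans (by linarith [hZr ω])
    exact (Real.rpow_le_rpow (norm_nonneg _) h1 hp0.le).trans
      (aux_rpow_add _ _ (norm_nonneg _) hr hp1.le)
  have hgi : Integrable (fun ω => 2 ^ (p - 1) * (‖X ω - μ‖ ^ p + r ^ p)) P :=
    (hXp.add (integrable_const _)).const_mul _
  have hpc : Continuous fun x : B => ‖x‖ ^ p :=
    continuous_norm.rpow_const (fun x => Or.inr hp0.le)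
  have hwpi : Integrable (fun ω => ‖w ω‖ ^ p) P :=
    hgi.mono' (hpc.comp_stronglyMeasurable hwm).aestronglyMeasurable
      (Eventually.of_forall fun ω => by
        rw [Real.norm_eq_abs, abs_of_nonneg (by positivity)]; exact hwp ω)
  have hYpi : Integrable (fun ω => ‖Y ω‖ ^ p) P :=
    hwpi.mono' (hpc.comp_stronglyMeasurable hYm).aestronglyMeasurable
      (Eventually.of_forall fun ω => by
        rw [Real.norm_eq_abs, abs_of_nonneg (by positivity)]
        exact Real.rpow_le_rpow (norm_nonneg _) (hY2 ω) hp0.le)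
  set Mc := P[Y | m] with hMc
  have hMcm : StronglyMeasurable[m] Mc := stronglyMeasurable_condExp
  have hMcb : ∀ᵐ ω ∂P, ‖Mc ω‖ ≤ 1 / lam := by
    have h1 := norm_condExp_le (μ := P) (m := m) Y
    have h2 : P[(‖Y ·‖) | m] ≤ᵐ[P] P[fun _ => 1 / lam | m] :=
      condExp_mono hYi.norm (integrable_const _) (Eventually.of_forall hY1)
    rw [condExp_const hm] at h2
    filter_upwards [h1, h2] with ω a b using a.trans b
  set E : Set Ω := {ω | ‖Mc ω‖ ≤ 1 / lam} with hE
  have hEm : MeasurableSet[m] E := hMcm.norm.measurable measurableSet_Iic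
  set M : Ω → B := E.indicator Mc with hM
  have hMeq : M =ᵐ[P] Mc := by
    filter_upwards [hMcb] with ω h
    exact Set.indicator_of_mem (s := E) h _
  have hMm : StronglyMeasurable[m] M := hMcm.indicator hEm
  have hMb : ∀ ω, ‖M ω‖ ≤ 1 / lam := by
    intro ω
    by_cases h : ω ∈ E
    · rw [hM, Set.indicator_of_mem h]; exact h
    · rw [hM, Set.indicator_of_notMem h, norm_zero]; positivity
  have hMi : Integrable M P := integrable_condExp.congr hMeq.symm
  refine ⟨M, hMm, hMb, ?_, ?_, ?_⟩
  · intro A hA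
    change ∫ ω in A, (Y ω - M ω) ∂P = 0
    rw [integral_sub hYi.integrableOn hMi.integrableOn,
      integral_congr_ae (ae_restrict_of_ae hMeq), setIntegral_condExp hm hYi hA, sub_self]
  · intro A hA
    change ∫ ω in A, lam ^ 2 * ‖Y ω - M ω‖ ^ 2 ∂P ≤ _
    have hpt : ∀ ω, lam ^ 2 * ‖Y ω - M ω‖ ^ 2 ≤ 2 * lam ^ p * (‖Y ω‖ ^ p + ‖M ω‖ ^ p) := by
      intro ω
      set t := lam * ‖Y ω - M ω‖ with ht
      have ht0 : 0 ≤ t := by positivity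
      have htn : ‖Y ω - M ω‖ ≤ ‖Y ω‖ + ‖M ω‖ := norm_sub_le _ _
      have ht2 : t ≤ 2 := by
        have : ‖Y ω - M ω‖ ≤ 2 / lam := by
          have := hY1 ω; have := hMb ω
          have e : 2 / lam = 1 / lam + 1 / lam := by ring
          linarith
        rw [le_div_iff₀ hlam] at this
        linarith
      have h1 : t ^ 2 ≤ 2 ^ (2 - p) * t ^ p := by
        rcases ht0.eq_or_lt with h | h
        · rw [← h]; simp [Real.zero_rpow hp0.ne']
        · have : t ^ 2 = t ^ (2 - p) * t ^ p := by
            rw [← Real.rpow_add h, ← Real.rpow_natCast]; norm_num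
          rw [this]
          gcongr
      have h2 : t ^ p ≤ lam ^ p * (2 ^ (p - 1) * (‖Y ω‖ ^ p + ‖M ω‖ ^ p)) := by
        rw [ht, Real.mul_rpow hlam.le (norm_nonneg _)]
        gcongr
        exact (Real.rpow_le_rpow (norm_nonneg _) htn hp0.le).trans
          (aux_rpow_add _ _ (norm_nonneg _) (norm_nonneg _) hp1.le)
      have h3 : (2 : ℝ) ^ (2 - p) * 2 ^ (p - 1) = 2 := by
        rw [← Real.rpow_add two_pos]; norm_num
      calc lam ^ 2 * ‖Y ω - M ω‖ ^ 2 = t ^ 2 := by rw [ht]; ring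
        _ ≤ 2 ^ (2 - p) * t ^ p := h1
        _ ≤ 2 ^ (2 - p) * (lam ^ p * (2 ^ (p - 1) * (‖Y ω‖ ^ p + ‖M ω‖ ^ p))) := by gcongr
        _ = (2 ^ (2 - p) * 2 ^ (p - 1)) * lam ^ p * (‖Y ω‖ ^ p + ‖M ω‖ ^ p) := by ring
        _ = _ := by rw [h3]
    have hMpi : Integrable (fun ω => ‖M ω‖ ^ p) P :=
      Integrable.of_bound (hpc.comp_stronglyMeasurable (hMm.mono hm)).aestronglyMeasurable
        ((1 / lam) ^ p) (Eventually.of_forall fun ω => by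
          rw [Real.norm_eq_abs, abs_of_nonneg (by positivity)]
          exact Real.rpow_le_rpow (norm_nonneg _) (hMb ω) hp0.le)
    have hLi : Integrable (fun ω => lam ^ 2 * ‖Y ω - M ω‖ ^ 2) P := by
      refine ((hYpi.add hMpi).const_mul (2 * lam ^ p)).mono' ?_ (Eventually.of_forall fun ω => ?_)
      · exact (((hYm.sub (hMm.mono hm)).norm.pow 2).const_mul _).aestronglyMeasurable
      · rw [Real.norm_eq_abs, abs_of_nonneg (by positivity)]; exact hpt ω
    have hM_Y : ∫ ω in A, ‖M ω‖ ^ p ∂P ≤ ∫ ω in A, ‖Y ω‖ ^ p ∂P := by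
      rw [← setIntegral_condExp hm hYpi hA]
      refine setIntegral_mono_ae hMpi.integrableOn integrable_condExp.integrableOn ?_
      have := Integrable.norm_condExp_rpow_le (μ := P) (m := m) (f := Y) hp1.le hYpi
      filter_upwards [this, hMeq] with ω a b
      rw [b]; exact a
    have hY_w : ∫ ω in A, ‖Y ω‖ ^ p ∂P ≤ 2 ^ (p - 1) * (v + r ^ p) * P.real A := by
      have h1 : ∫ ω in A, ‖Y ω‖ ^ p ∂P ≤
          ∫ ω in A, 2 ^ (p - 1) * (‖X ω - μ‖ ^ p + r ^ p) ∂P :=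
        setIntegral_mono hYpi.integrableOn hgi.integrableOn fun ω =>
          (Real.rpow_le_rpow (norm_nonneg _) (hY2 ω) hp0.le).trans (hwp ω)
      refine h1.trans ?_
      rw [integral_const_mul, integral_add hXp.integrableOn (integrable_const _).integrableOn,
        setIntegral_const, smul_eq_mul]
      have h2 : ∫ ω in A, ‖X ω - μ‖ ^ p ∂P ≤ P.real A * v := by
        rw [← setIntegral_condExp hm hXp hA]
        have := setIntegral_mono_ae (μ := P) (s := A) (g := fun _ => v)
          (integrable_condExp (μ := P) (m := m) (f := fun ω' => ‖X ω' - μ‖ ^ p)).integrableOn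
          (integrable_const v).integrableOn hcv
        rwa [setIntegral_const, smul_eq_mul] at this
      rw [mul_assoc]
      gcongr
      linarith
    calc ∫ ω in A, lam ^ 2 * ‖Y ω - M ω‖ ^ 2 ∂P
        ≤ ∫ ω in A, 2 * lam ^ p * (‖Y ω‖ ^ p + ‖M ω‖ ^ p) ∂P :=
          setIntegral_mono hLi.integrableOn
            ((hYpi.add hMpi).const_mul (2 * lam ^ p)).integrableOn hpt
      _ = 2 * lam ^ p * (∫ ω in A, ‖Y ω‖ ^ p ∂P + ∫ ω in A, ‖M ω‖ ^ p ∂P) := by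
          rw [integral_const_mul, integral_add hYpi.integrableOn hMpi.integrableOn]
      _ ≤ 2 * lam ^ p * (2 ^ (p - 1) * (v + r ^ p) * P.real A
            + 2 ^ (p - 1) * (v + r ^ p) * P.real A) := by
          gcongr
          exact hM_Y.trans hY_w
      _ = _ := by
          have : (2 : ℝ) ^ (p + 1) = 2 ^ (p - 1) * 4 := by
            have h4 : (4 : ℝ) = 2 ^ (2 : ℝ) := by norm_num
            rw [h4, ← Real.rpow_add two_pos]; ring_nf
          rw [this]; ring
  · have h1 : P[fun ω => Y ω - w ω | m] =ᵐ[P] fun ω => M ω - (μ - Z ω) := by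
      have a := condExp_sub (m := m) hYi hwi
      have b := condExp_sub (m := m) hXi hZi
      rw [condExp_of_stronglyMeasurable hm hZ hZi] at b
      filter_upwards [a, b, hcm, hMeq] with ω a b c d
      have a' : (P[fun ω => Y ω - w ω | m]) ω = (P[Y | m] - P[w | m]) ω := a
      have b' : (P[w | m]) ω = (P[X | m] - Z) ω := b
      rw [a', Pi.sub_apply, b', Pi.sub_apply, c, d]
    have h2 := norm_condExp_le (μ := P) (m := m) (fun ω => Y ω - w ω)
    set κ := Kp p * lam ^ (p - 1) * 2 ^ (p - 1) with hκ
    have hK := aux_Kp_nonneg hp1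
    have hκ0 : 0 ≤ κ := by positivity
    have h3 : P[fun ω => ‖Y ω - w ω‖ | m] ≤ᵐ[P]
        P[κ • ((fun ω => ‖X ω - μ‖ ^ p) + fun _ => r ^ p) | m] := by
      refine condExp_mono (hYi.sub hwi).norm ((hXp.add (integrable_const _)).smul κ)
        (Eventually.of_forall fun ω => ?_)
      refine (hY3 ω).trans ?_
      simp only [Pi.smul_apply, Pi.add_apply, smul_eq_mul, hκ]
      rw [mul_assoc (Kp p * lam ^ (p - 1))]
      gcongr
      exact hwp ω
    have h4 := condExp_smul (μ := P) κ ((fun ω => ‖X ω - μ‖ ^ p) + fun _ => r ^ p) m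
    have h5 := condExp_add (m := m) hXp (integrable_const (μ := P) (r ^ p))
    rw [condExp_const hm] at h5
    filter_upwards [h1, h2, h3, h4, h5, hcv] with ω a1 a2 a3 a4 a5 a6
    rw [← a1]
    refine a2.trans (a3.trans ?_)
    rw [a4, Pi.smul_apply, a5, Pi.add_apply, smul_eq_mul]
    calc _ ≤ κ * (v + r ^ p) := by gcongr
      _ = _ := by rw [hκ]; ring
end

end helpers

/-- **Time-uniform line-crossing inequality (Theorem).** With an `F_k`-measurable
centering `Ẑ` satisfying `P(‖μ - Ẑ‖ ≥ r₂) ≤ δ₂`, for any `λ > 0` and `δ₁ + δ₂ ≤ 1`, with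
probability at least `1 - δ₁ - δ₂`, simultaneously for all `n > k`,
`‖μ̂ₙ(k) - μ‖ ≤ λ^{p-1}(β𝔠_p + K_p2^{p-1})(v + r₂^p) + β log(2/δ₁)/(λ(n-k))`. -/
theorem stmt12
    {B : Type*} [NormedAddCommGroup B] [NormedSpace ℝ B] [CompleteSpace B]
    [TopologicalSpace.SeparableSpace B]
    {Ω : Type*} {mΩ : MeasurableSpace Ω} {P : Measure Ω} [IsProbabilityMeasure P]
    (β : ℝ) (hβ : 1 ≤ β)
    (hsmooth : ∀ x y : B, ‖x + y‖ ^ 2 + ‖x - y‖ ^ 2 ≤ 2 * ‖x‖ ^ 2 + 2 * β ^ 2 * ‖y‖ ^ 2)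
    (ℱ : Filtration ℕ mΩ) (X : ℕ → Ω → B) (μ : B) (p v : ℝ)
    (hp1 : 1 < p) (hp2 : p ≤ 2) (hv : 0 < v)
    (hadapted : ∀ n : ℕ, 1 ≤ n → StronglyMeasurable[ℱ n] (X n))
    (hint : ∀ n : ℕ, 1 ≤ n → Integrable (X n) P)
    (hmom : ∀ n : ℕ, 1 ≤ n → Integrable (fun ω => ‖X n ω‖ ^ p) P)
    (hcondmean : ∀ n : ℕ, P[X (n + 1) | ℱ n] =ᵐ[P] fun _ => μ)
    (hcondmom : ∀ n : ℕ, ∀ᵐ ω ∂P, (P[fun ω' => ‖X (n + 1) ω' - μ‖ ^ p | ℱ n]) ω ≤ v)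
    (k : ℕ) (Z : Ω → B) (hZ : StronglyMeasurable[ℱ k] Z)
    (δ₂ : ℝ) (hδ₂ : δ₂ ∈ Set.Ioo (0 : ℝ) 1) (r₂ : ℝ) (hr₂ : 0 ≤ r₂)
    (htail : P {ω | r₂ ≤ ‖μ - Z ω‖} ≤ ENNReal.ofReal δ₂)
    (lam : ℝ) (hlam : 0 < lam)
    (δ₁ : ℝ) (hδ₁ : δ₁ ∈ Set.Ioo (0 : ℝ) 1) (hδ : δ₁ + δ₂ ≤ 1) :
    ENNReal.ofReal (1 - δ₁ - δ₂) ≤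
      P {ω | ∀ n : ℕ, k < n →
        ‖((n : ℝ) - k)⁻¹ • (∑ m ∈ Finset.Ioc k n,
            (truncB (lam • (X m ω - Z ω)) • (X m ω - Z ω) + Z ω)) - μ‖ ≤
          lam ^ (p - 1) * (β * frakC p (1 / β) + Kp p * 2 ^ (p - 1)) * (v + r₂ ^ p)
            + β * Real.log (2 / δ₁) / (lam * ((n : ℝ) - k))} := by
  have hp0 : 0 < p := by linarith
  have hβ0 : 0 < β := by linarith
  have hδ₁0 := hδ₁.1
  have hr : 0 < r₂ := by
    rcases hr₂.eq_or_lt with h | h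
    · exfalso
      have e : {ω | r₂ ≤ ‖μ - Z ω‖} = Set.univ := by
        ext ω; simp [← h]
      rw [e, measure_univ, ← ENNReal.ofReal_one, ENNReal.ofReal_le_ofReal_iff hδ₂.1.le] at htail
      linarith [hδ₂.2]
    · exact h
  -- modified centering
  set E : Set Ω := {ω | ‖μ - Z ω‖ < r₂} with hE
  have hEm : MeasurableSet[ℱ k] E :=
    (stronglyMeasurable_const.sub hZ).norm.measurable measurableSet_Iio
  set Z' : Ω → B := E.piecewise Z (fun _ => μ) with hZ'
  have hZ'm : StronglyMeasurable[ℱ k] Z' := StronglyMeasurable.piecewise hEm hZ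
    stronglyMeasurable_const
  have hZ'r : ∀ ω, ‖μ - Z' ω‖ ≤ r₂ := by
    intro ω
    by_cases h : ω ∈ E
    · rw [hZ', Set.piecewise_eq_of_mem _ _ _ h]; exact le_of_lt h
    · rw [hZ', Set.piecewise_eq_of_notMem _ _ _ h]; simpa using hr₂
  have hXm : ∀ n, 1 ≤ n → StronglyMeasurable (X n) := fun n hn => (hadapted n hn).mono (ℱ.le n)
  have hXp : ∀ n, 1 ≤ n → Integrable (fun ω => ‖X n ω - μ‖ ^ p) P := by
    intro n hn
    have hpc : Continuous fun x : B => ‖x - μ‖ ^ p :=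
      (continuous_id.sub continuous_const).norm.rpow_const (fun x => Or.inr hp0.le)
    refine (((hmom n hn).add (integrable_const (‖μ‖ ^ p))).const_mul (2 ^ (p - 1))).mono'
      (hpc.comp_stronglyMeasurable (hXm n hn)).aestronglyMeasurable
      (Filter.Eventually.of_forall fun ω => ?_)
    rw [Real.norm_eq_abs, abs_of_nonneg (by positivity)]
    exact (Real.rpow_le_rpow (norm_nonneg _) (norm_sub_le _ _) hp0.le).trans
      (aux_rpow_add _ _ (norm_nonneg _) (norm_nonneg _) hp1.le)
  have data := fun j : ℕ => aux_stepdata (P := P) (ℱ.le (k + j)) (X (k + j + 1)) Z' μ p v r₂ lam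
    hp1 hp2 hr₂ hlam (hXm _ (by omega)) (hint _ (by omega)) (hXp _ (by omega))
    (hcondmean (k + j)) (hcondmom (k + j)) (hZ'm.mono (ℱ.mono (by omega))) hZ'r
  choose M hMm hMb hM0 hM2 hM3 using data
  set Y : ℕ → Ω → B := fun j ω =>
    truncB (lam • (X (k + j + 1) ω - Z' ω)) • (X (k + j + 1) ω - Z' ω) with hY
  have hYm : ∀ j, StronglyMeasurable[ℱ (k + j + 1)] (Y j) := by
    intro j
    have hc : Continuous fun x : B => truncB (lam • x) • x := by
      have : (fun x : B => truncB (lam • x) • x) = fun x => (max 1 ‖lam • x‖)⁻¹ • x := by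
        funext x; rw [aux_truncB]
      rw [this]
      refine Continuous.smul (Continuous.inv₀ (by fun_prop) fun x => ?_) continuous_id
      exact (lt_max_of_lt_left one_pos).ne'
    exact hc.comp_stronglyMeasurable
      ((hadapted _ (by omega)).sub (hZ'm.mono (ℱ.mono (by omega))))
  have hYb : ∀ j ω, ‖Y j ω‖ ≤ 1 / lam := fun j ω => (aux_Y lam hlam _).1
  set D : ℕ → Ω → B := fun j ω => (lam / β) • (Y j ω - M j ω) with hD
  have hDm : ∀ j, StronglyMeasurable[ℱ (k + j + 1)] (D j) := fun j =>
    ((hYm j).sub ((hMm j).mono (ℱ.mono (by omega)))).const_smul _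
  have hDn : ∀ j ω, ‖D j ω‖ = lam / β * ‖Y j ω - M j ω‖ := by
    intro j ω
    simp only [hD]
    rw [norm_smul, Real.norm_eq_abs, abs_of_pos (by positivity)]
  have hDb : ∀ j ω, ‖D j ω‖ ≤ 2 * (1 / β) := by
    intro j ω
    rw [hDn]
    have h1 : ‖Y j ω - M j ω‖ ≤ 1 / lam + 1 / lam :=
      (norm_sub_le _ _).trans (add_le_add (hYb j ω) (hMb j ω))
    calc lam / β * ‖Y j ω - M j ω‖ ≤ lam / β * (1 / lam + 1 / lam) := by gcongr
      _ = _ := by field_simp; ring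
  set S : ℕ → Ω → B := fun j ω => ∑ i ∈ Finset.range j, D i ω with hS
  have hSm : ∀ j, StronglyMeasurable[ℱ (k + j)] (S j) := by
    intro j
    refine Finset.stronglyMeasurable_fun_sum _ fun i hi => ?_
    have := Finset.mem_range.1 hi
    exact (hDm i).mono (ℱ.mono (by omega))
  have hSb : ∀ j ω, ‖S j ω‖ ≤ j * (2 * (1 / β)) := by
    intro j ω
    refine (norm_sum_le _ _).trans ((Finset.sum_le_sum fun i _ => hDb i ω).trans ?_)
    simp
  set c := lam ^ p * frakC p (1 / β) * (v + r₂ ^ p) with hc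
  set c0 := (Real.exp (2 * (1 / β)) - 2 * (1 / β) - 1) / (2 * (1 / β)) ^ 2 with hc0
  have hc00 : 0 ≤ c0 := by
    apply div_nonneg _ (by positivity)
    linarith [Real.add_one_le_exp (2 * (1 / β))]
  have hfr : frakC p (1 / β) = 2 ^ (p + 1) * c0 := by
    unfold frakC; rw [hc0, mul_div_assoc]
  have hvr : 0 ≤ v + r₂ ^ p := by positivity
  have hcn : 0 ≤ c := by rw [hc, hfr]; positivity
  have hstep : ∀ j A, MeasurableSet[ℱ (k + j)] A →
      ∫ ω in A, Real.cosh ‖S j ω + D j ω‖ ∂P ≤ (1 + c) * ∫ ω in A, Real.cosh ‖S j ω‖ ∂P := by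
    intro j A hA
    refine aux_step (ℱ.le (k + j)) β hβ hsmooth (S j) (D j) (hSm j) ((hDm j).mono (ℱ.le _))
      _ _ c (hSb j) (by positivity) (hDb j) ?_ ?_ A hA
    · intro A hA
      simp only [hD]
      rw [integral_smul, hM0 j A hA, smul_zero]
    · intro A hA
      have hDmm : StronglyMeasurable (D j) := (hDm j).mono (ℱ.le _)
      have hYMm : StronglyMeasurable fun ω => Y j ω - M j ω :=
        ((hYm j).mono (ℱ.le _)).sub ((hMm j).mono (ℱ.le _))
      have hpt : ∀ ω, β ^ 2 * (Real.exp ‖D j ω‖ - 1 - ‖D j ω‖) ≤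
          c0 * (lam ^ 2 * ‖Y j ω - M j ω‖ ^ 2) := by
        intro ω
        have h1 := aux_psi (norm_nonneg (D j ω)) (hDb j ω) (by positivity)
        rw [← hc0] at h1
        calc β ^ 2 * (Real.exp ‖D j ω‖ - 1 - ‖D j ω‖) ≤ β ^ 2 * (‖D j ω‖ ^ 2 * c0) := by gcongr
          _ = _ := by rw [hDn]; field_simp
      have i2 : Integrable (fun ω => c0 * (lam ^ 2 * ‖Y j ω - M j ω‖ ^ 2)) P := by
        refine Integrable.of_bound (((hYMm.norm.pow 2).const_mul _).const_mul _).aestronglyMeasurable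
          (c0 * (lam ^ 2 * (1 / lam + 1 / lam) ^ 2)) (Filter.Eventually.of_forall fun ω => ?_)
        have h1 : ‖Y j ω - M j ω‖ ≤ 1 / lam + 1 / lam :=
          (norm_sub_le _ _).trans (add_le_add (hYb j ω) (hMb j ω))
        rw [Real.norm_eq_abs, abs_of_nonneg (by positivity)]
        gcongr
      have i1 : Integrable (fun ω => β ^ 2 * (Real.exp ‖D j ω‖ - 1 - ‖D j ω‖)) P := by
        have hcont : Continuous fun x : B => β ^ 2 * (Real.exp ‖x‖ - 1 - ‖x‖) := by fun_prop
        refine i2.mono' (hcont.comp_stronglyMeasurable hDmm).aestronglyMeasurable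
          (Filter.Eventually.of_forall fun ω => ?_)
        have : 0 ≤ Real.exp ‖D j ω‖ - 1 - ‖D j ω‖ := by
          linarith [Real.add_one_le_exp ‖D j ω‖]
        rw [Real.norm_eq_abs, abs_of_nonneg (by positivity)]
        exact hpt ω
      refine (setIntegral_mono i1.integrableOn i2.integrableOn hpt).trans ?_
      rw [integral_const_mul]
      refine (mul_le_mul_of_nonneg_left (hM2 j A hA) hc00).trans (le_of_eq ?_)
      rw [hc, hfr]; ring
  set N : ℕ → Ω → ℝ := fun j ω => Real.exp (-c * j) * Real.cosh ‖S j ω‖ with hN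
  have hFc : Continuous fun x : B => Real.cosh ‖x‖ := Real.continuous_cosh.comp continuous_norm
  have hville := aux_ville (P := P) (fun j => ℱ (k + j)) (fun j => ℱ.le _)
    (fun i j hij => ℱ.mono (by omega)) N
    (fun j ω => mul_nonneg (Real.exp_pos _).le (Real.cosh_pos _).le)
    (fun j => ((hFc.comp_stronglyMeasurable (hSm j)).const_mul _).measurable)
    (fun j => by
      refine Integrable.const_mul (Integrable.of_bound (hFc.comp_stronglyMeasurable
        ((hSm j).mono (ℱ.le _))).aestronglyMeasurable (Real.cosh (j * (2 * (1 / β))))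
        (Filter.Eventually.of_forall fun ω => ?_)) _
      rw [Real.norm_eq_abs, abs_of_pos (Real.cosh_pos _), Real.cosh_le_cosh,
        abs_of_nonneg (norm_nonneg (S j ω))]
      exact (hSb j ω).trans (le_abs_self _))
    (fun j A hA => by
      simp only [hN]
      rw [integral_const_mul, integral_const_mul]
      have e : ∀ ω, S (j + 1) ω = S j ω + D j ω := fun ω => Finset.sum_range_succ _ _
      simp only [e]
      have h1 := hstep j A hA
      have h2 : 0 ≤ ∫ ω in A, Real.cosh ‖S j ω‖ ∂P :=
        integral_nonneg fun ω => (Real.cosh_pos _).le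
      have h3 : Real.exp (-c * ((j + 1 : ℕ) : ℝ)) * (1 + c) ≤ Real.exp (-c * j) := by
        have e2 : Real.exp (-c * j) = Real.exp (-c * ((j + 1 : ℕ) : ℝ)) * Real.exp c := by
          rw [← Real.exp_add]; push_cast; ring_nf
        rw [e2]
        gcongr
        linarith [Real.add_one_le_exp c]
      calc _ ≤ Real.exp (-c * ((j + 1 : ℕ) : ℝ)) * ((1 + c) * ∫ ω in A, Real.cosh ‖S j ω‖ ∂P) := by
            gcongr
        _ = (Real.exp (-c * ((j + 1 : ℕ) : ℝ)) * (1 + c)) * ∫ ω in A, Real.cosh ‖S j ω‖ ∂P := by ring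
        _ ≤ _ := by gcongr)
    (by simp [hN, hS]) (1 / δ₁) (by positivity)
  rw [one_div_one_div] at hville
  set T : Set Ω := {ω | ∀ n : ℕ, k < n →
        ‖((n : ℝ) - k)⁻¹ • (∑ m ∈ Finset.Ioc k n,
            (truncB (lam • (X m ω - Z ω)) • (X m ω - Z ω) + Z ω)) - μ‖ ≤
          lam ^ (p - 1) * (β * frakC p (1 / β) + Kp p * 2 ^ (p - 1)) * (v + r₂ ^ p)
            + β * Real.log (2 / δ₁) / (lam * ((n : ℝ) - k))} with hT
  set b := lam ^ (p - 1) * Kp p * 2 ^ (p - 1) * (v + r₂ ^ p) with hb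
  set Q : Set Ω := {ω | ¬ ∀ j, ‖M j ω - (μ - Z' ω)‖ ≤ b} with hQ
  have hQ0 : P Q = 0 := ae_iff.1 (ae_all_iff.2 hM3)
  have hcover : Set.univ ⊆ T ∪ ({ω | ∃ n, 1 / δ₁ ≤ N n ω} ∪ {ω | r₂ ≤ ‖μ - Z ω‖} ∪ Q) := by
    intro ω _
    by_contra hcon
    simp only [Set.mem_union, not_or] at hcon
    obtain ⟨hnT, ⟨hn1, hn2⟩, hn3⟩ := hcon
    apply hnT
    have hn1' : ∀ j, N j ω < 1 / δ₁ := by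
      intro j; by_contra h; exact hn1 ⟨j, not_lt.1 h⟩
    have hn2' : ω ∈ E := by
      have h0 : ‖μ - Z ω‖ < r₂ := lt_of_not_ge (fun h => hn2 h)
      exact h0
    have hn3' : ∀ j, ‖M j ω - (μ - Z' ω)‖ ≤ b := not_not.1 hn3
    have hZZ : Z' ω = Z ω := Set.piecewise_eq_of_mem _ _ _ hn2'
    intro n hn
    obtain ⟨j, rfl⟩ : ∃ j, n = k + j := ⟨n - k, by omega⟩
    have hj : (0 : ℝ) < j := by exact_mod_cast (by omega : 0 < j)
    have hsum : ∀ i, ∑ m ∈ Finset.Ioc k (k + i),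
        (truncB (lam • (X m ω - Z ω)) • (X m ω - Z ω) + Z ω) =
        ∑ l ∈ Finset.range i, (Y l ω + Z ω) := by
      intro i
      induction i with
      | zero => simp
      | succ i ih =>
        rw [← add_assoc, Finset.sum_Ioc_succ_top (by omega), ih, Finset.sum_range_succ]
        simp only [hY, hZZ]
    have hnk : (((k + j : ℕ) : ℝ) - k) = j := by push_cast; ring
    rw [hsum, hnk]
    have hSj : ‖S j ω‖ ≤ c * j + Real.log (2 / δ₁) := by
      have h1 := hn1' j
      simp only [hN] at h1
      have h2 : Real.exp ‖S j ω‖ / 2 ≤ Real.cosh ‖S j ω‖ := by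
        rw [Real.cosh_eq]; linarith [Real.exp_pos (-‖S j ω‖)]
      have h3 : Real.exp (-c * j) * (Real.exp ‖S j ω‖ / 2) ≤ 1 / δ₁ :=
        (mul_le_mul_of_nonneg_left h2 (Real.exp_pos _).le).trans h1.le
      have h4 : Real.exp (-c * j + ‖S j ω‖) ≤ 2 / δ₁ := by
        rw [Real.exp_add]
        have : 2 / δ₁ = 2 * (1 / δ₁) := by ring
        rw [this]; linarith
      have := (Real.le_log_iff_exp_le (by positivity)).2 h4
      linarith
    have hdec : (j : ℝ)⁻¹ • (∑ l ∈ Finset.range j, (Y l ω + Z ω)) - μ =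
        (j : ℝ)⁻¹ • ((β / lam) • S j ω + ∑ l ∈ Finset.range j, (M l ω - (μ - Z' ω))) := by
      have e1 : (β / lam) • S j ω = ∑ l ∈ Finset.range j, (Y l ω - M l ω) := by
        simp only [hS, hD]
        rw [← Finset.smul_sum, smul_smul]
        have : β / lam * (lam / β) = 1 := by field_simp
        rw [this, one_smul]
      have e2 : μ = (j : ℝ)⁻¹ • ∑ l ∈ Finset.range j, μ := by
        rw [Finset.sum_const, Finset.card_range, ← Nat.cast_smul_eq_nsmul ℝ, smul_smul,
          inv_mul_cancel₀ hj.ne', one_smul]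
      rw [e1, ← Finset.sum_add_distrib]
      conv_lhs => rw [e2]
      rw [← smul_sub, ← Finset.sum_sub_distrib, hZZ]
      congr 1
      refine Finset.sum_congr rfl fun l _ => ?_
      abel
    rw [hdec, norm_smul, norm_inv, Real.norm_eq_abs, abs_of_pos hj]
    have hs2 : ‖∑ l ∈ Finset.range j, (M l ω - (μ - Z' ω))‖ ≤ j * b := by
      refine (norm_sum_le _ _).trans ((Finset.sum_le_sum fun i _ => hn3' i).trans ?_)
      simp
    have hs1 : ‖(β / lam) • S j ω‖ ≤ β / lam * (c * j + Real.log (2 / δ₁)) := by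
      rw [norm_smul, Real.norm_eq_abs, abs_of_pos (by positivity)]
      gcongr
    calc (j : ℝ)⁻¹ * ‖(β / lam) • S j ω + ∑ l ∈ Finset.range j, (M l ω - (μ - Z' ω))‖
        ≤ (j : ℝ)⁻¹ * (β / lam * (c * j + Real.log (2 / δ₁)) + j * b) := by
          gcongr
          exact (norm_add_le _ _).trans (add_le_add hs1 hs2)
      _ = _ := by
          have e2 : lam ^ p = lam ^ (p - 1) * lam := by
            rw [← Real.rpow_add_one hlam.ne']; ring_nf
          rw [hc, hb, e2]
          field_simp
          ring
  have hfin : 1 ≤ P T + ENNReal.ofReal (δ₁ + δ₂) := by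
    calc (1 : ENNReal) = P Set.univ := measure_univ.symm
      _ ≤ P (T ∪ ({ω | ∃ n, 1 / δ₁ ≤ N n ω} ∪ {ω | r₂ ≤ ‖μ - Z ω‖} ∪ Q)) := measure_mono hcover
      _ ≤ P T + (P {ω | ∃ n, 1 / δ₁ ≤ N n ω} + P {ω | r₂ ≤ ‖μ - Z ω‖} + P Q) :=
          (measure_union_le _ _).trans (add_le_add le_rfl ((measure_union_le _ _).trans
            (add_le_add (measure_union_le _ _) le_rfl)))
      _ ≤ P T + ENNReal.ofReal (δ₁ + δ₂) := by
          rw [hQ0, add_zero, ENNReal.ofReal_add hδ₁.1.le hδ₂.1.le]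
          gcongr
  have e : 1 - δ₁ - δ₂ = 1 - (δ₁ + δ₂) := by ring
  rw [e, ENNReal.ofReal_sub _ (by linarith [hδ₁.1, hδ₂.1]), ENNReal.ofReal_one]
  exact tsub_le_iff_right.2 hfin
end

section
/- Fix an integer k ≥ 0 and an integer N > k. Let Ẑ be an F_k-measurable 𝔹-valued random variable and let δ₂ ∈ (0,1) and r₂ ≥ 0 be such that P(‖μ − Ẑ‖ ≥ r₂) ≤ δ₂. Fix δ₁ ∈ (0,1) with δ₁ + δ₂ ≤ 1 and set λ := ( β·log(2/δ₁) / ( (N−k)·(β·𝔠_p + K_p·2^{p−1})·(v + r₂^p) ) )^{1/p} and μ̂_N(k) := (1/(N−k))·Σ_{m=k+1}^N ( Trunc(λ(X_m − Ẑ))·(X_m − Ẑ) + Ẑ ). Then with probability at least 1 − δ₁ − δ₂: ‖μ̂_N(k) − μ‖ ≤ 2·( (β·𝔠_p + K_p·2^{p−1})·(v + r₂^p) )^{1/p}·( β·log(2/δ₁)/(N−k) )^{(p−1)/p}. -/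
open MeasureTheory
open scoped Classical

/-! ### Gradient of the squared norm -/

lemma exists_grad {B : Type*} [NormedAddCommGroup B] [NormedSpace ℝ B] (β : ℝ)
    (hsmooth : ∀ x y : B, ‖x + y‖ ^ 2 + ‖x - y‖ ^ 2 ≤ 2 * ‖x‖ ^ 2 + 2 * β ^ 2 * ‖y‖ ^ 2)
    (x : B) : ∃ g : B →L[ℝ] ℝ, ‖g‖ ≤ 2 * ‖x‖ ∧ ∀ w : B,
      0 ≤ ‖x + w‖ ^ 2 - ‖x‖ ^ 2 - g w ∧ ‖x + w‖ ^ 2 - ‖x‖ ^ 2 - g w ≤ β ^ 2 * ‖w‖ ^ 2 := by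
  obtain ⟨j, hj1, hjx⟩ := exists_dual_vector'' ℝ x
  have hjx' : j x = ‖x‖ := by simpa using hjx
  have hlow : ∀ w : B, 0 ≤ ‖x + w‖ ^ 2 - ‖x‖ ^ 2 - ((2 * ‖x‖) • j) w := by
    intro w
    have h1 : |j (x + w)| ≤ ‖x + w‖ := by
      have := j.le_of_opNorm_le hj1 (x + w)
      simpa using this
    have h2 : (j (x + w)) ^ 2 ≤ ‖x + w‖ ^ 2 := by
      rw [← sq_abs (j (x + w))]
      exact pow_le_pow_left₀ (abs_nonneg _) h1 2
    simp only [map_add, hjx', _root_.smul_apply, smul_eq_mul] at h2 ⊢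
    nlinarith [sq_nonneg (j w)]
  refine ⟨(2 * ‖x‖) • j, ?_, fun w => ⟨hlow w, ?_⟩⟩
  · rw [norm_smul, Real.norm_of_nonneg (by positivity)]
    nlinarith [norm_nonneg x]
  · set g : B →L[ℝ] ℝ := (2 * ‖x‖) • j with hg
    have key : ∀ n : ℕ, ∀ w : B,
        ‖x + w‖ ^ 2 - ‖x‖ ^ 2 - g w ≤ β ^ 2 * (1 + (1 / 2) ^ n) * ‖w‖ ^ 2 := by
      intro n
      induction n with
      | zero =>
        intro w
        have h1 := hsmooth x w
        have h2 := hlow (-w)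
        rw [map_neg, ← sub_eq_add_neg] at h2
        norm_num
        nlinarith
      | succ n ih =>
        intro w
        have h1 := hsmooth (x + (1 / 2 : ℝ) • w) ((1 / 2 : ℝ) • w)
        have h2 := ih ((1 / 2 : ℝ) • w)
        have e1 : x + (1 / 2 : ℝ) • w + (1 / 2 : ℝ) • w = x + w := by
          rw [add_assoc, ← add_smul]; norm_num
        rw [e1, add_sub_cancel_right] at h1
        rw [norm_smul] at h1 h2
        rw [map_smul, smul_eq_mul] at h2
        rw [Real.norm_of_nonneg (by norm_num)] at h1 h2
        rw [pow_succ (1 / 2 : ℝ) n]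
        nlinarith
    have hlim : Filter.Tendsto (fun n : ℕ => β ^ 2 * (1 + (1 / 2 : ℝ) ^ n) * ‖w‖ ^ 2)
        Filter.atTop (nhds (β ^ 2 * (1 + 0) * ‖w‖ ^ 2)) := by
      refine Filter.Tendsto.mul_const _ (Filter.Tendsto.const_mul _ (Filter.Tendsto.const_add _ ?_))
      exact tendsto_pow_atTop_nhds_zero_of_lt_one (by norm_num) (by norm_num)
    have := ge_of_tendsto' hlim (fun n => key n w)
    simpa using this

lemma exists_grad_fun {B : Type*} [NormedAddCommGroup B] [NormedSpace ℝ B] (β : ℝ)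
    (hsmooth : ∀ x y : B, ‖x + y‖ ^ 2 + ‖x - y‖ ^ 2 ≤ 2 * ‖x‖ ^ 2 + 2 * β ^ 2 * ‖y‖ ^ 2) :
    ∃ g : B → (B →L[ℝ] ℝ), Continuous g ∧ (∀ x, ‖g x‖ ≤ 2 * ‖x‖) ∧ 
      (∀ x w : B, 0 ≤ ‖x + w‖ ^ 2 - ‖x‖ ^ 2 - g x w ∧
        ‖x + w‖ ^ 2 - ‖x‖ ^ 2 - g x w ≤ β ^ 2 * ‖w‖ ^ 2) ∧
      (∀ x y : B, (g y - g x) (y - x) ≤ 2 * β ^ 2 * ‖y - x‖ ^ 2) := by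
  choose g hg1 hg2 using exists_grad β hsmooth
  have hmono : ∀ x y : B, (g y - g x) (y - x) ≤ 2 * β ^ 2 * ‖y - x‖ ^ 2 := by
    intro x y
    have h1 := (hg2 x (y - x)).2
    have h2 := (hg2 y (x - y)).2
    rw [add_sub_cancel] at h1 h2
    rw [norm_sub_rev x y] at h2
    have h3 : g y (x - y) = - g y (y - x) := by rw [← map_neg, neg_sub]
    rw [_root_.sub_apply]
    linarith
  refine ⟨g, ?_, hg1, hg2, hmono⟩
  have hlip : ∀ x y : B, ‖g y - g x‖ ≤ 3 * β ^ 2 * ‖y - x‖ := by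
    intro x y
    rcases eq_or_ne y x with rfl | hne
    · simp
    have hpos : 0 < ‖y - x‖ := norm_pos_iff.2 (sub_ne_zero.2 hne)
    have hub : ∀ w : B, ‖w‖ = ‖y - x‖ → (g y - g x) w ≤ 3 * β ^ 2 * ‖y - x‖ ^ 2 := by
      intro w hw
      have h1 := (hg2 x w).2
      have h2 := (hg2 y (x + w - y)).1
      have h3 := (hg2 x (y - x)).1
      rw [add_sub_cancel] at h2 h3
      have h4 := hmono x y
      have h5 : g y (x + w - y) = g y w - g y (y - x) := by rw [← map_sub]; congr 1; abel
      rw [_root_.sub_apply] at h4 ⊢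
      rw [hw] at h1
      linarith
    refine ContinuousLinearMap.opNorm_le_bound _ (by positivity) (fun w => ?_)
    rcases eq_or_ne w 0 with rfl | hw
    · simp
    have hwpos : 0 < ‖w‖ := norm_pos_iff.2 hw
    have hn : ‖(‖y - x‖ / ‖w‖) • w‖ = ‖y - x‖ := by
      rw [norm_smul, Real.norm_of_nonneg (by positivity)]; field_simp
    have h1 := hub ((‖y - x‖ / ‖w‖) • w) hn
    have h2 := hub (-((‖y - x‖ / ‖w‖) • w)) (by rw [norm_neg, hn])
    rw [map_neg] at h2
    rw [map_smul, smul_eq_mul] at h1 h2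
    rw [Real.norm_eq_abs]
    have h3 : |‖y - x‖ / ‖w‖ * (g y - g x) w| ≤ 3 * β ^ 2 * ‖y - x‖ ^ 2 := abs_le.2 ⟨by linarith, h1⟩
    rw [abs_mul, abs_of_pos (by positivity), div_mul_eq_mul_div, div_le_iff₀ hwpos] at h3
    have : ‖y - x‖ * |(g y - g x) w| ≤ ‖y - x‖ * (3 * β ^ 2 * ‖y - x‖ * ‖w‖) := by
      linarith [h3]
    exact le_of_mul_le_mul_left this hpos
  have : LipschitzWith (Real.toNNReal (3 * β ^ 2)) g := by
    apply LipschitzWith.of_dist_le_mul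
    intro x y
    rw [dist_eq_norm, dist_eq_norm, Real.coe_toNNReal _ (by positivity)]
    exact hlip y x
  exact this.continuous

lemma exp_ratio_mono {a b : ℝ} (ha : 0 ≤ a) (hab : a ≤ b) (hb : 0 < b) :
    Real.exp a - 1 - a ≤ (Real.exp b - b - 1) / b ^ 2 * a ^ 2 := by
  have hs : ∀ x : ℝ, HasSum (fun n : ℕ => x ^ (n + 2) / ((n + 2).factorial : ℝ))
      (Real.exp x - 1 - x) := by
    intro x
    have h := NormedSpace.expSeries_div_hasSum_exp x
    rw [← Real.exp_eq_exp_ℝ] at h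
    have h2 := (hasSum_nat_add_iff' 2).2 h
    simpa [Finset.sum_range_succ, sub_sub] using h2
  have h1 := hs a
  have h2 := (hs b).mul_left (a ^ 2 / b ^ 2)
  have := hasSum_le (fun n => ?_) h1 h2
  · calc _ ≤ _ := this
      _ = _ := by field_simp; ring
  · have e : a ^ 2 / b ^ 2 * (b ^ (n + 2) / ((n + 2).factorial : ℝ))
        = a ^ 2 * b ^ n / ((n + 2).factorial : ℝ) := by
      field_simp; ring
    rw [e, pow_add, mul_comm (a ^ n)]
    gcongr

lemma kp_ineq {p t : ℝ} (hp1 : 1 < p) (ht : 0 ≤ t) : t - 1 ≤ Kp p * t ^ p := by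
  have hc : 0 < p - 1 := by linarith
  have hp : 0 < p := by linarith
  have hb := one_add_mul_self_le_rpow_one_add (s := (p - 1) / p * t - 1)
    (by have : 0 ≤ (p - 1) / p * t := by positivity
        linarith) hp1.le
  rw [add_sub_cancel, Real.mul_rpow (by positivity) ht] at hb
  have e : ((p - 1) / p) ^ p = ((p - 1) / p) ^ (p - 1) * ((p - 1) / p) := by
    rw [← Real.rpow_add_one (by positivity)]; congr 1; ring
  rw [e] at hb
  unfold Kp
  have e2 : 1 + p * ((p - 1) / p * t - 1) = (p - 1) * (t - 1) := by field_simp; ring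
  rw [e2] at hb
  have : (p - 1) * (t - 1) ≤ (p - 1) * (1 / p * ((p - 1) / p) ^ (p - 1) * t ^ p) := by
    calc _ ≤ _ := hb
      _ = _ := by field_simp
  exact le_of_mul_le_mul_left this hc


/-! ### Pinelis-type inequality for a smoothed hyperbolic cosine of the norm -/

lemma sinh_le_mul_cosh {q : ℝ} (hq : 0 ≤ q) : Real.sinh q ≤ q * Real.cosh q := by
  have hd : ∀ x : ℝ, HasDerivAt (fun x => x * Real.cosh x - Real.sinh x) (x * Real.sinh x) x := by
    intro x
    have := ((hasDerivAt_id x).mul (Real.hasDerivAt_cosh x)).sub (Real.hasDerivAt_sinh x)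
    refine HasDerivAt.congr_deriv this ?_
    simp
  have hm : MonotoneOn (fun x => x * Real.cosh x - Real.sinh x) (Set.Ici 0) := by
    apply monotoneOn_of_deriv_nonneg (convex_Ici 0)
    · exact fun x _ => (hd x).continuousAt.continuousWithinAt
    · exact fun x _ => (hd x).differentiableAt.differentiableWithinAt
    · intro x hx
      rw [interior_Ici] at hx
      rw [(hd x).deriv]
      exact mul_nonneg (le_of_lt hx) (Real.sinh_nonneg_iff.2 (le_of_lt hx))
  have := hm (Set.mem_Ici.2 le_rfl) (Set.mem_Ici.2 hq) hq
  simp at this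
  linarith

lemma cosh_add_le_mul_exp {x y : ℝ} (hy : 0 ≤ y) :
    Real.cosh (x + y) ≤ Real.cosh x * Real.exp y := by
  rw [Real.cosh_add, ← Real.cosh_add_sinh y]
  have h1 := Real.sinh_nonneg_iff.2 hy
  have h2 := (Real.sinh_lt_cosh x).le
  nlinarith

lemma cosh_line {h h' : ℝ → ℝ} {a β ε : ℝ} (ha : 0 ≤ a) (hβ : 1 ≤ β) (hε : 0 < ε)
    (hh0 : ∀ t, 0 ≤ h t) (hd : ∀ t, HasDerivAt h (h' t) t) (hc : Continuous h')
    (hb : ∀ t, (h' t) ^ 2 ≤ 4 * h t * a ^ 2)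
    (hm : ∀ s t, s < t → h' t - h' s ≤ 2 * β ^ 2 * a ^ 2 * (t - s))
    (hgrow : ∀ t, 0 ≤ t → √(h t + ε) ≤ √(h 0 + ε) + t * a) :
    Real.cosh √(h 1 + ε) ≤ Real.cosh √(h 0 + ε) +
      Real.sinh √(h 0 + ε) / (2 * √(h 0 + ε)) * h' 0 +
      β ^ 2 * Real.cosh √(h 0 + ε) * (Real.exp a - 1 - a) := by
  set q : ℝ → ℝ := fun t => √(h t + ε) with hq
  have hqpos : ∀ t, 0 < q t := fun t => Real.sqrt_pos.2 (by linarith [hh0 t])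
  have hqsq : ∀ t, q t ^ 2 = h t + ε := fun t => Real.sq_sqrt (by linarith [hh0 t])
  have hqd : ∀ t, HasDerivAt q (h' t / (2 * q t)) t := by
    intro t
    have := ((hd t).add_const ε).sqrt (by linarith [hh0 t])
    exact this
  set A : ℝ → ℝ := fun t => Real.sinh (q t) / (2 * q t) with hA
  have hAd : ∀ t, HasDerivAt A
      ((Real.cosh (q t) * (h' t / (2 * q t)) * (2 * q t)
        - Real.sinh (q t) * (2 * (h' t / (2 * q t)))) / (2 * q t) ^ 2) t := by
    intro t
    exact ((hqd t).sinh).div ((hqd t).const_mul 2) (by linarith [hqpos t])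
  set A' : ℝ → ℝ := fun t => ((Real.cosh (q t) * (h' t / (2 * q t)) * (2 * q t)
        - Real.sinh (q t) * (2 * (h' t / (2 * q t)))) / (2 * q t) ^ 2) with hA'
  set C : ℝ → ℝ := fun t => Real.cosh (q t) with hC
  have hCd : ∀ t, HasDerivAt C (A t * h' t) t := by
    intro t
    convert (hqd t).cosh using 1
    simp only [hA]; ring
  set M := β ^ 2 * Real.cosh (q 0) with hM
  have hMnn : 0 ≤ M := by have := Real.cosh_pos (q 0); positivity
  have hsecond : ∀ t, 0 ≤ t → A' t * h' t + A t * (2 * β ^ 2 * a ^ 2) ≤ M * a ^ 2 * Real.exp (t * a) := by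
    intro t ht
    have hqp := hqpos t
    have h1 : A' t * h' t = (q t * Real.cosh (q t) - Real.sinh (q t)) / (4 * q t ^ 3) * (h' t) ^ 2 := by
      simp only [hA']; field_simp; ring
    have h2 := sinh_le_mul_cosh hqp.le
    have h3 : (h' t) ^ 2 ≤ 4 * q t ^ 2 * a ^ 2 := by
      rw [hqsq]; nlinarith [hb t, sq_nonneg a]
    have h4 : A' t * h' t ≤ (q t * Real.cosh (q t) - Real.sinh (q t)) / (4 * q t ^ 3) *
        (4 * q t ^ 2 * a ^ 2) := by
      rw [h1]
      exact mul_le_mul_of_nonneg_left h3 (div_nonneg (by linarith) (by positivity))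
    have h5 : (q t * Real.cosh (q t) - Real.sinh (q t)) / (4 * q t ^ 3) * (4 * q t ^ 2 * a ^ 2)
        = a ^ 2 * (Real.cosh (q t) - Real.sinh (q t) / q t) := by
      field_simp
    have h6 : A t * (2 * β ^ 2 * a ^ 2) = β ^ 2 * a ^ 2 * (Real.sinh (q t) / q t) := by
      simp only [hA]; field_simp
    have h7 : Real.sinh (q t) / q t ≤ Real.cosh (q t) := by
      rw [div_le_iff₀ hqp]; linarith
    have hβ2 : 1 ≤ β ^ 2 := by nlinarith
    have h8 : a ^ 2 * (Real.cosh (q t) - Real.sinh (q t) / q t) ≤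
        β ^ 2 * (a ^ 2 * (Real.cosh (q t) - Real.sinh (q t) / q t)) :=
      le_mul_of_one_le_left (mul_nonneg (sq_nonneg a) (by linarith)) hβ2
    have h9 : Real.cosh (q t) ≤ Real.cosh (q 0) * Real.exp (t * a) := by
      refine le_trans ?_ (cosh_add_le_mul_exp (mul_nonneg ht ha))
      rw [Real.cosh_le_cosh, abs_of_pos hqp, abs_of_nonneg (by have := hqpos 0; positivity)]
      exact hgrow t ht
    have h10 : β ^ 2 * a ^ 2 * Real.cosh (q t) ≤
        β ^ 2 * a ^ 2 * (Real.cosh (q 0) * Real.exp (t * a)) :=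
      mul_le_mul_of_nonneg_left h9 (by positivity)
    have h11 : M * a ^ 2 * Real.exp (t * a) =
        β ^ 2 * a ^ 2 * (Real.cosh (q 0) * Real.exp (t * a)) := by rw [hM]; ring
    rw [h11]; rw [h5] at h4; rw [h6]; linarith
  have hApos : ∀ t, 0 ≤ A t := fun t =>
    div_nonneg (Real.sinh_nonneg_iff.2 (hqpos t).le) (by linarith [hqpos t])
  have hAc : Continuous A := continuous_iff_continuousAt.2 fun t => (hAd t).continuousAt
  have hBd : ∀ t, HasDerivAt (fun t => A 0 * h' 0 + M * a * (Real.exp (t * a) - 1))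
      (M * a ^ 2 * Real.exp (t * a)) t := by
    intro t
    have := (((((hasDerivAt_id t).mul_const a).exp).sub_const 1).const_mul (M * a)).const_add
      (A 0 * h' 0)
    refine HasDerivAt.congr_deriv this ?_
    simp; ring
  -- first comparison
  have hfirst : ∀ ⦃t⦄, t ∈ Set.Icc (0 : ℝ) 1 →
      A t * h' t ≤ A 0 * h' 0 + M * a * (Real.exp (t * a) - 1) := by
    refine image_le_of_liminf_slope_right_le_deriv_boundary (f := fun t => A t * h' t)
      (B' := fun t => M * a ^ 2 * Real.exp (t * a)) (hAc.mul hc).continuousOn (by simp) ?_ ?_ ?_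
    · exact fun t _ => (hBd t).continuousAt.continuousWithinAt
    · exact fun t _ => (hBd t).hasDerivWithinAt
    · intro s hs r hr
      have hlim : Filter.Tendsto (fun z => slope A s z * h' z + A s * (2 * β ^ 2 * a ^ 2))
          (nhdsWithin s (Set.Ioi s)) (nhds (A' s * h' s + A s * (2 * β ^ 2 * a ^ 2))) := by
        refine Filter.Tendsto.add_const _ (Filter.Tendsto.mul ?_ ?_)
        · exact (hasDerivAt_iff_tendsto_slope.1 (hAd s)).mono_left
            (nhdsWithin_mono _ fun z hz => ne_of_gt hz)
        · exact (hc.tendsto s).mono_left nhdsWithin_le_nhds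
      have hev := hlim.eventually_lt_const (lt_of_le_of_lt (hsecond s hs.1) hr)
      have hev2 : ∀ᶠ z in nhdsWithin s (Set.Ioi s), slope (fun t => A t * h' t) s z < r := by
        filter_upwards [hev, self_mem_nhdsWithin] with z hz hzs
        refine lt_of_le_of_lt ?_ hz
        have hzs' : 0 < z - s := sub_pos.2 hzs
        have h1 := hm s z hzs
        rw [slope_def_field, slope_def_field]
        have : (A z * h' z - A s * h' s) / (z - s) =
            (A z - A s) / (z - s) * h' z + A s * ((h' z - h' s) / (z - s)) := by
          field_simp; ring
        rw [this]
        have h2 : (h' z - h' s) / (z - s) ≤ 2 * β ^ 2 * a ^ 2 := by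
          rw [div_le_iff₀ hzs']; exact h1
        have := mul_le_mul_of_nonneg_left h2 (hApos s)
        linarith
      exact hev2.frequently
  -- second comparison
  have hB2d : ∀ t, HasDerivAt (fun t => C 0 + A 0 * h' 0 * t + M * (Real.exp (t * a) - 1 - t * a))
      (A 0 * h' 0 + M * a * (Real.exp (t * a) - 1)) t := by
    intro t
    have h1 := ((hasDerivAt_id t).mul_const a)
    have := (((hasDerivAt_id t).const_mul (A 0 * h' 0)).const_add (C 0)).add
      (((h1.exp.sub_const 1).sub h1).const_mul M)
    refine HasDerivAt.congr_deriv this ?_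
    simp; ring
  have hfin := image_le_of_deriv_right_le_deriv_boundary (f := C) (f' := fun t => A t * h' t)
    (a := 0) (b := 1) (fun t _ => (hCd t).continuousAt.continuousWithinAt)
    (fun t _ => (hCd t).hasDerivWithinAt)
    (B := fun t => C 0 + A 0 * h' 0 * t + M * (Real.exp (t * a) - 1 - t * a))
    (B' := fun t => A 0 * h' 0 + M * a * (Real.exp (t * a) - 1)) (by simp)
    (fun t _ => (hB2d t).continuousAt.continuousWithinAt)
    (fun t _ => (hB2d t).hasDerivWithinAt)
    (fun t ht => hfirst ⟨ht.1, ht.2.le⟩) (Set.right_mem_Icc.2 zero_le_one)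
  simpa using hfin

lemma cosh_step {B : Type*} [NormedAddCommGroup B] [NormedSpace ℝ B] {β ε : ℝ} (hβ : 1 ≤ β)
    (hε : 0 < ε) {g : B → (B →L[ℝ] ℝ)} (hgc : Continuous g) (hgn : ∀ x, ‖g x‖ ≤ 2 * ‖x‖)
    (hg : ∀ x w : B, 0 ≤ ‖x + w‖ ^ 2 - ‖x‖ ^ 2 - g x w ∧
        ‖x + w‖ ^ 2 - ‖x‖ ^ 2 - g x w ≤ β ^ 2 * ‖w‖ ^ 2)
    (hgm : ∀ x y : B, (g y - g x) (y - x) ≤ 2 * β ^ 2 * ‖y - x‖ ^ 2) (x w : B) :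
    Real.cosh √(‖x + w‖ ^ 2 + ε) ≤ Real.cosh √(‖x‖ ^ 2 + ε) +
      Real.sinh √(‖x‖ ^ 2 + ε) / (2 * √(‖x‖ ^ 2 + ε)) * g x w +
      β ^ 2 * Real.cosh √(‖x‖ ^ 2 + ε) * (Real.exp ‖w‖ - 1 - ‖w‖) := by
  have key := cosh_line (h := fun t => ‖x + t • w‖ ^ 2) (h' := fun t => g (x + t • w) w)
    (norm_nonneg w) hβ hε (fun t => by positivity) ?_ ?_ ?_ ?_ ?_
  · simpa using key
  · intro t
    rw [hasDerivAt_iff_isLittleO]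
    refine Asymptotics.IsBigO.trans_isLittleO (g := fun z => (z - t) ^ 2) ?_ ?_
    · refine Asymptotics.IsBigO.of_bound (β ^ 2 * ‖w‖ ^ 2) (Filter.Eventually.of_forall fun z => ?_)
      have h1 := hg (x + t • w) ((z - t) • w)
      have e : x + t • w + (z - t) • w = x + z • w := by
        rw [add_assoc, ← add_smul]; congr 2; ring
      rw [e, map_smul, norm_smul] at h1
      rw [Real.norm_of_nonneg (by simpa using h1.1), Real.norm_of_nonneg (sq_nonneg _)]
      refine h1.2.trans (le_of_eq ?_)
      rw [mul_pow, Real.norm_eq_abs, sq_abs]; ring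
    · have h2 : (fun z : ℝ => (z - t) ^ 2) = fun z => (z - t) * (z - t) := by
        funext z; ring
      rw [h2]
      have : (fun z : ℝ => z - t) =o[nhds t] (fun _ => (1 : ℝ)) := by
        rw [Asymptotics.isLittleO_one_iff]
        have : Filter.Tendsto (fun z : ℝ => z - t) (nhds t) (nhds (t - t)) :=
          (continuous_id.sub continuous_const).tendsto t
        simpa using this
      simpa using this.mul_isBigO (Asymptotics.isBigO_refl (fun z : ℝ => z - t) (nhds t))
  · fun_prop
  · intro t
    have h1 : |g (x + t • w) w| ≤ 2 * ‖x + t • w‖ * ‖w‖ := by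
      have := (g (x + t • w)).le_of_opNorm_le (hgn _) w
      simpa using this
    have h2 := pow_le_pow_left₀ (abs_nonneg _) h1 2
    rw [sq_abs] at h2
    nlinarith
  · intro s t hst
    have h1 := hgm (x + s • w) (x + t • w)
    have e : x + t • w - (x + s • w) = (t - s) • w := by rw [sub_smul]; abel
    rw [e, map_smul, norm_smul, Real.norm_of_nonneg (by linarith), smul_eq_mul,
      _root_.sub_apply] at h1
    have hp : 0 < t - s := by linarith
    have : (t - s) * (g (x + t • w) w - g (x + s • w) w) ≤
        (t - s) * (2 * β ^ 2 * ‖w‖ ^ 2 * (t - s)) := by nlinarith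
    exact le_of_mul_le_mul_left this hp
  · intro t ht
    simp only [zero_smul, add_zero]
    rw [Real.sqrt_le_iff]
    have h1 : ‖x + t • w‖ ≤ ‖x‖ + t * ‖w‖ := by
      refine (norm_add_le _ _).trans ?_
      rw [norm_smul, Real.norm_of_nonneg ht]
    have h2 := pow_le_pow_left₀ (norm_nonneg _) h1 2
    have h3 : ‖x‖ ≤ √(‖x‖ ^ 2 + ε) := Real.le_sqrt_of_sq_le (by linarith)
    have h4 : √(‖x‖ ^ 2 + ε) ^ 2 = ‖x‖ ^ 2 + ε := Real.sq_sqrt (by positivity)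
    have h5 : 0 ≤ t * ‖w‖ := by positivity
    refine ⟨by positivity, ?_⟩
    nlinarith


/-! ### Exponential supermartingale step -/

lemma mart_step {B : Type*} [NormedAddCommGroup B] [NormedSpace ℝ B] [CompleteSpace B]
    {Ω : Type*} {mΩ : MeasurableSpace Ω} {P : Measure Ω} [IsProbabilityMeasure P]
    {β ε b s R : ℝ} (hβ : 1 ≤ β) (hε : 0 < ε) (hb : 0 < b)
    {g : B → (B →L[ℝ] ℝ)} (hgc : Continuous g) (hgn : ∀ x, ‖g x‖ ≤ 2 * ‖x‖)
    (hg : ∀ x w : B, 0 ≤ ‖x + w‖ ^ 2 - ‖x‖ ^ 2 - g x w ∧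
        ‖x + w‖ ^ 2 - ‖x‖ ^ 2 - g x w ≤ β ^ 2 * ‖w‖ ^ 2)
    (hgm : ∀ x y : B, (g y - g x) (y - x) ≤ 2 * β ^ 2 * ‖y - x‖ ^ 2)
    {m : MeasurableSpace Ω} (hm : m ≤ mΩ) {S D : Ω → B} (hS : StronglyMeasurable[m] S)
    (hSR : ∀ᵐ ω ∂P, ‖S ω‖ ≤ R) (hD : StronglyMeasurable[mΩ] D) (hDb : ∀ᵐ ω ∂P, ‖D ω‖ ≤ b)
    (hD0 : P[D | m] =ᵐ[P] 0) (hvar : ∀ᵐ ω ∂P, (P[fun ω => ‖D ω‖ ^ 2 | m]) ω ≤ s) :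
    ∫ ω, Real.cosh √(‖S ω + D ω‖ ^ 2 + ε) ∂P ≤
      (1 + β ^ 2 * ((Real.exp b - b - 1) / b ^ 2) * s) * ∫ ω, Real.cosh √(‖S ω‖ ^ 2 + ε) ∂P := by
  set c := (Real.exp b - b - 1) / b ^ 2 with hc
  have hcnn : 0 ≤ c := div_nonneg (by linarith [Real.add_one_le_exp b]) (by positivity)
  have hS' : StronglyMeasurable[mΩ] S := hS.mono hm
  have hψc : Continuous fun x : B => Real.cosh √(‖x‖ ^ 2 + ε) := by
    exact Real.continuous_cosh.comp (by fun_prop)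
  set ψ : B → ℝ := fun x => Real.cosh √(‖x‖ ^ 2 + ε) with hψ
  have hψ1 : ∀ x, 1 ≤ ψ x := fun x => Real.one_le_cosh _
  have hψb : ∀ (x : B) (r : ℝ), ‖x‖ ≤ r → ‖ψ x‖ ≤ Real.cosh √(r ^ 2 + ε) := by
    intro x r hx
    rw [Real.norm_of_nonneg (by linarith [hψ1 x])]
    simp only [hψ]
    rw [Real.cosh_le_cosh, abs_of_nonneg (Real.sqrt_nonneg _), abs_of_nonneg (Real.sqrt_nonneg _)]
    have := pow_le_pow_left₀ (norm_nonneg x) hx 2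
    exact Real.sqrt_le_sqrt (by linarith)
  have hψS : StronglyMeasurable[m] fun ω => ψ (S ω) := hψc.comp_stronglyMeasurable hS
  have hint1 : Integrable (fun ω => ψ (S ω)) P := by
    refine Integrable.of_bound (hψS.mono hm).aestronglyMeasurable _
      (hSR.mono fun ω h => hψb _ _ h)
  have hint2 : Integrable (fun ω => ψ (S ω + D ω)) P := by
    refine Integrable.of_bound
      (hψc.comp_stronglyMeasurable (hS'.add hD)).aestronglyMeasurable
      (Real.cosh √((R + b) ^ 2 + ε)) ?_
    filter_upwards [hSR, hDb] with ω h1 h2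
    exact hψb _ _ ((norm_add_le _ _).trans (add_le_add h1 h2))
  have hDint : Integrable D P := Integrable.of_bound hD.aestronglyMeasurable _ hDb
  -- linear term
  set ℓ : B → (B →L[ℝ] ℝ) := fun x =>
    (Real.sinh √(‖x‖ ^ 2 + ε) / (2 * √(‖x‖ ^ 2 + ε))) • g x with hℓ
  have hℓc : Continuous ℓ := by
    refine Continuous.smul (Continuous.div (Real.continuous_sinh.comp (by fun_prop)) (by fun_prop)
      (fun x => ?_)) hgc
    have : 0 < √(‖x‖ ^ 2 + ε) := Real.sqrt_pos.2 (by positivity)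
    positivity
  have hℓb : ∀ x : B, ‖ℓ x‖ ≤ ψ x * ‖x‖ := by
    intro x
    have hq : 0 < √(‖x‖ ^ 2 + ε) := Real.sqrt_pos.2 (by positivity)
    have hs := Real.sinh_nonneg_iff.2 hq.le
    simp only [hℓ]
    rw [norm_smul, Real.norm_of_nonneg (by positivity)]
    have h1 : Real.sinh √(‖x‖ ^ 2 + ε) / (2 * √(‖x‖ ^ 2 + ε)) ≤ ψ x / 2 := by
      rw [div_le_iff₀ (by positivity)]
      have := sinh_le_mul_cosh hq.le
      simp only [hψ]; linarith
    calc _ ≤ ψ x / 2 * (2 * ‖x‖) := mul_le_mul h1 (hgn x) (norm_nonneg _)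
            (by linarith [hψ1 x])
      _ = _ := by ring
  have hℓS : StronglyMeasurable[m] fun ω => ℓ (S ω) := hℓc.comp_stronglyMeasurable hS
  have hint3 : Integrable (fun ω => ℓ (S ω) (D ω)) P := by
    refine Integrable.of_bound ?_ (Real.cosh √(R ^ 2 + ε) * R * b) ?_
    · have : Continuous fun z : (B →L[ℝ] ℝ) × B => z.1 z.2 := by fun_prop
      exact (this.comp_stronglyMeasurable ((hℓS.mono hm).prodMk hD)).aestronglyMeasurable
    · filter_upwards [hSR, hDb] with ω h1 h2
      have hR : 0 ≤ R := (norm_nonneg _).trans h1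
      refine ((ℓ (S ω)).le_opNorm _).trans ?_
      have h3 := hψb _ _ h1
      rw [Real.norm_of_nonneg (by linarith [hψ1 (S ω)])] at h3
      have h4 : ‖ℓ (S ω)‖ ≤ Real.cosh √(R ^ 2 + ε) * R :=
        (hℓb _).trans (mul_le_mul h3 h1 (norm_nonneg _) (Real.cosh_pos _).le)
      exact mul_le_mul h4 h2 (norm_nonneg _) (mul_nonneg (Real.cosh_pos _).le hR)
  have hlin : ∫ ω, ℓ (S ω) (D ω) ∂P = 0 := by
    rw [← integral_condExp hm]
    have h1 := condExp_bilin_of_stronglyMeasurable_left (μ := P)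
      (ContinuousLinearMap.id ℝ (B →L[ℝ] ℝ)) hℓS (g := D) hint3 hDint
    rw [integral_congr_ae (g := fun _ => (0 : ℝ))]
    · simp
    · refine Filter.EventuallyEq.trans h1 ?_
      filter_upwards [hD0] with ω h
      rw [h]; simp
  -- quadratic term
  have hD2 : Integrable (fun ω => ‖D ω‖ ^ 2) P := by
    refine Integrable.of_bound (hD.norm.pow 2).aestronglyMeasurable (b ^ 2) ?_
    filter_upwards [hDb] with ω h
    rw [Real.norm_of_nonneg (by positivity)]
    exact pow_le_pow_left₀ (norm_nonneg _) h 2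
  have hint4 : Integrable (fun ω => ψ (S ω) * ‖D ω‖ ^ 2) P := by
    refine hD2.bdd_mul (c := Real.cosh √(R ^ 2 + ε)) (hψS.mono hm).aestronglyMeasurable ?_
    exact hSR.mono fun ω h => hψb _ _ h
  have hquad : ∫ ω, ψ (S ω) * ‖D ω‖ ^ 2 ∂P ≤ s * ∫ ω, ψ (S ω) ∂P := by
    rw [← integral_condExp hm, ← integral_const_mul]
    have h1 := condExp_mul_of_stronglyMeasurable_left (μ := P) hψS hint4 hD2
    refine integral_mono_ae integrable_condExp (hint1.const_mul _) ?_
    refine Filter.EventuallyLE.trans h1.le ?_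
    filter_upwards [hvar] with ω h
    simp only [Pi.mul_apply]
    rw [mul_comm s]
    exact mul_le_mul_of_nonneg_left h (by linarith [hψ1 (S ω)])
  calc ∫ ω, ψ (S ω + D ω) ∂P
      ≤ ∫ ω, (ψ (S ω) + ℓ (S ω) (D ω) + β ^ 2 * c * (ψ (S ω) * ‖D ω‖ ^ 2)) ∂P := by
        refine integral_mono_ae hint2 ((hint1.add hint3).add (hint4.const_mul _)) ?_
        filter_upwards [hDb] with ω h
        refine (cosh_step hβ hε hgc hgn hg hgm (S ω) (D ω)).trans ?_
        have h1 := exp_ratio_mono (norm_nonneg (D ω)) h hb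
        have h2 : β ^ 2 * ψ (S ω) * (Real.exp ‖D ω‖ - 1 - ‖D ω‖) ≤
            β ^ 2 * ψ (S ω) * (c * ‖D ω‖ ^ 2) :=
          mul_le_mul_of_nonneg_left h1 (mul_nonneg (sq_nonneg _) (by linarith [hψ1 (S ω)]))
        simp only [hℓ, _root_.smul_apply, smul_eq_mul]
        simp only [hψ] at h2 ⊢
        linarith
    _ = ∫ ω, ψ (S ω) ∂P + 0 + β ^ 2 * c * ∫ ω, ψ (S ω) * ‖D ω‖ ^ 2 ∂P := by
        have hint13 : Integrable (fun ω => ψ (S ω) + ℓ (S ω) (D ω)) P := hint1.add hint3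
        rw [integral_add hint13 (hint4.const_mul _), integral_add hint1 hint3, hlin,
          integral_const_mul]
    _ ≤ _ := by
        have : β ^ 2 * c * ∫ ω, ψ (S ω) * ‖D ω‖ ^ 2 ∂P ≤ β ^ 2 * c * (s * ∫ ω, ψ (S ω) ∂P) :=
          mul_le_mul_of_nonneg_left hquad (by positivity)
        linarith

lemma mart_tail {B : Type*} [NormedAddCommGroup B] [NormedSpace ℝ B] [CompleteSpace B]
    {Ω : Type*} {mΩ : MeasurableSpace Ω} {P : Measure Ω} [IsProbabilityMeasure P]
    {β b s : ℝ} (hβ : 1 ≤ β) (hb : 0 < b) (hs : 0 ≤ s)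
    (hsmooth : ∀ x y : B, ‖x + y‖ ^ 2 + ‖x - y‖ ^ 2 ≤ 2 * ‖x‖ ^ 2 + 2 * β ^ 2 * ‖y‖ ^ 2)
    (ℱ : Filtration ℕ mΩ) (k n : ℕ) (D : ℕ → Ω → B)
    (hD : ∀ i, StronglyMeasurable[ℱ (k + i + 1)] (D i)) (hDb : ∀ i, ∀ᵐ ω ∂P, ‖D i ω‖ ≤ b)
    (hD0 : ∀ i, P[D i | ℱ (k + i)] =ᵐ[P] 0)
    (hvar : ∀ i, ∀ᵐ ω ∂P, (P[fun ω => ‖D i ω‖ ^ 2 | ℱ (k + i)]) ω ≤ s) (δ : ℝ) (hδ : 0 < δ) :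
    P {ω | Real.log (2 / δ) + n * (β ^ 2 * ((Real.exp b - b - 1) / b ^ 2) * s) ≤
      ‖∑ i ∈ Finset.range n, D i ω‖} ≤ ENNReal.ofReal δ := by
  obtain ⟨g, hgc, hgn, hg, hgm⟩ := exists_grad_fun β hsmooth
  set κ := β ^ 2 * ((Real.exp b - b - 1) / b ^ 2) * s with hκ
  have hκnn : 0 ≤ κ := by
    have : 0 ≤ Real.exp b - b - 1 := by linarith [Real.add_one_le_exp b]
    positivity
  set S : ℕ → Ω → B := fun n ω => ∑ i ∈ Finset.range n, D i ω with hS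
  have hSs : ∀ n, S (n + 1) = fun ω => S n ω + D n ω := by
    intro n; funext ω; simp only [hS, Finset.sum_range_succ]
  have hSm : ∀ n, StronglyMeasurable[ℱ (k + n)] (S n) := by
    intro n
    refine Finset.stronglyMeasurable_fun_sum _ fun i hi => ?_
    exact (hD i).mono (ℱ.mono (by have := Finset.mem_range.1 hi; omega))
  have hSb : ∀ n : ℕ, ∀ᵐ ω ∂P, ‖S n ω‖ ≤ n * b := by
    intro n
    filter_upwards [ae_all_iff.2 hDb] with ω h
    refine (norm_sum_le_of_le _ fun i _ => h i).trans ?_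
    simp
  have hE : ∀ ε : ℝ, 0 < ε → ∀ n : ℕ, ∫ ω, Real.cosh √(‖S n ω‖ ^ 2 + ε) ∂P ≤
      Real.exp (n * κ) * Real.cosh √ε := by
    intro ε hε n
    induction n with
    | zero => simp [hS]
    | succ n ih =>
      have h1 := mart_step hβ hε hb hgc hgn hg hgm (ℱ.le (k + n)) (hSm n) (hSb n)
        ((hD n).mono (ℱ.le _)) (hDb _) (hD0 _) (hvar _)
      rw [hSs]
      refine h1.trans ?_
      have h2 : 1 + κ ≤ Real.exp κ := by linarith [Real.add_one_le_exp κ]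
      have h3 : 0 ≤ ∫ ω, Real.cosh √(‖S n ω‖ ^ 2 + ε) ∂P :=
        integral_nonneg fun ω => (Real.cosh_pos _).le
      calc _ ≤ Real.exp κ * (Real.exp (n * κ) * Real.cosh √ε) :=
            mul_le_mul h2 ih h3 (Real.exp_pos _).le
        _ = _ := by
            rw [← mul_assoc, ← Real.exp_add]; push_cast; ring_nf
  have hE' : ∀ ε : ℝ, 0 < ε → ∫ ω, Real.cosh ‖S n ω‖ ∂P ≤ Real.exp (n * κ) * Real.cosh √ε := by
    intro ε hε
    refine le_trans (integral_mono_of_nonneg (Filter.Eventually.of_forall fun ω =>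
      (Real.cosh_pos _).le) ?_ (Filter.Eventually.of_forall fun ω => ?_)) (hE ε hε n)
    · refine Integrable.of_bound (C := Real.cosh √((n * b) ^ 2 + ε)) ?_ ?_
      · have : Continuous fun x : B => Real.cosh √(‖x‖ ^ 2 + ε) :=
          Real.continuous_cosh.comp (by fun_prop)
        exact (this.comp_stronglyMeasurable ((hSm n).mono (ℱ.le _))).aestronglyMeasurable
      · filter_upwards [hSb n] with ω h
        rw [Real.norm_of_nonneg (Real.cosh_pos _).le, Real.cosh_le_cosh,
          abs_of_nonneg (Real.sqrt_nonneg _), abs_of_nonneg (Real.sqrt_nonneg _)]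
        have := pow_le_pow_left₀ (norm_nonneg _) h 2
        exact Real.sqrt_le_sqrt (by linarith)
    · simp only
      rw [Real.cosh_le_cosh, abs_of_nonneg (Real.sqrt_nonneg _), abs_of_nonneg (norm_nonneg _)]
      exact Real.le_sqrt_of_sq_le (by linarith)
  have hE0 : ∫ ω, Real.cosh ‖S n ω‖ ∂P ≤ Real.exp (n * κ) := by
    have hlim : Filter.Tendsto (fun ε : ℝ => Real.exp (n * κ) * Real.cosh √ε)
        (nhdsWithin 0 (Set.Ioi 0)) (nhds (Real.exp (n * κ) * Real.cosh √0)) := by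
      have : Continuous fun ε : ℝ => Real.exp (n * κ) * Real.cosh √ε :=
        continuous_const.mul (Real.continuous_cosh.comp Real.continuous_sqrt)
      exact (this.tendsto 0).mono_left nhdsWithin_le_nhds
    rw [Real.sqrt_zero, Real.cosh_zero, mul_one] at hlim
    exact ge_of_tendsto hlim (by filter_upwards [self_mem_nhdsWithin] with ε hε using hE' ε hε)
  have hSint : Integrable (fun ω => Real.cosh ‖S n ω‖) P := by
    refine Integrable.of_bound (C := Real.cosh (n * b)) ?_ ?_
    · exact (Real.continuous_cosh.comp_stronglyMeasurable
        ((hSm n).mono (ℱ.le _)).norm).aestronglyMeasurable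
    · filter_upwards [hSb n] with ω h
      rw [Real.norm_of_nonneg (Real.cosh_pos _).le, Real.cosh_le_cosh,
          abs_of_nonneg (norm_nonneg _), abs_of_nonneg (by positivity)]
      exact h
  have hmk := mul_meas_ge_le_integral_of_nonneg
    (Filter.Eventually.of_forall fun ω => (Real.cosh_pos ‖S n ω‖).le) hSint
    (Real.exp (n * κ) / δ)
  have hreal : P.real {ω | Real.exp (n * κ) / δ ≤ Real.cosh ‖S n ω‖} ≤ δ := by
    have h1 := hmk.trans hE0
    rw [div_mul_eq_mul_div, div_le_iff₀ hδ] at h1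
    exact le_of_mul_le_mul_left h1 (Real.exp_pos _)
  refine (measure_mono ?_).trans (ENNReal.le_ofReal_iff_toReal_le (measure_ne_top _ _) hδ.le |>.2 hreal)
  intro ω hω
  simp only [Set.mem_ofPred_eq] at hω ⊢
  have h1 := Real.exp_le_exp.2 hω
  rw [Real.exp_add, Real.exp_log (by positivity)] at h1
  have h2 : Real.exp ‖S n ω‖ / 2 ≤ Real.cosh ‖S n ω‖ := by
    rw [Real.cosh_eq]; have := Real.exp_pos (-‖S n ω‖); linarith
  refine le_trans ?_ h2
  calc Real.exp (n * κ) / δ = 2 / δ * Real.exp (n * κ) / 2 := by ring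
    _ ≤ _ := by linarith


/-! ### Truncation -/

lemma truncB_smul_eq {B : Type*} [NormedAddCommGroup B] [NormedSpace ℝ B] (x : B) :
    truncB x • x = (max 1 ‖x‖)⁻¹ • x := by
  unfold truncB
  split_ifs with h
  · simp [h]
  · have hx : 0 < ‖x‖ := norm_pos_iff.2 h
    congr 1
    rcases le_total 1 ‖x‖ with h1 | h1
    · rw [min_eq_left h1, max_eq_right h1, one_div]
    · rw [min_eq_right h1, max_eq_left h1, div_self hx.ne', inv_one]

lemma truncB_norm_le_one {B : Type*} [NormedAddCommGroup B] [NormedSpace ℝ B] (x : B) :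
    ‖truncB x • x‖ ≤ 1 := by
  rw [truncB_smul_eq, norm_smul, Real.norm_of_nonneg (by positivity), inv_mul_le_iff₀ (by positivity)]
  simp

lemma truncB_sq_le {B : Type*} [NormedAddCommGroup B] [NormedSpace ℝ B] {p : ℝ} (hp1 : 1 < p)
    (hp2 : p ≤ 2) (x : B) : ‖truncB x • x‖ ^ 2 ≤ ‖x‖ ^ p := by
  rcases le_total 1 ‖x‖ with h1 | h1
  · exact (pow_le_one₀ (norm_nonneg _) (truncB_norm_le_one x)).trans
      (Real.one_le_rpow h1 (by linarith))
  · rw [truncB_smul_eq, max_eq_left h1, inv_one, one_smul, ← Real.rpow_two]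
    exact Real.rpow_le_rpow_of_exponent_ge' (norm_nonneg _) h1 (by linarith) hp2

lemma kp_nonneg {p : ℝ} (hp1 : 1 < p) : 0 ≤ Kp p := by
  unfold Kp
  have : 0 < p - 1 := by linarith
  positivity

lemma truncB_bias_le {B : Type*} [NormedAddCommGroup B] [NormedSpace ℝ B] {p : ℝ} (hp1 : 1 < p)
    (x : B) : ‖truncB x • x - x‖ ≤ Kp p * ‖x‖ ^ p := by
  rcases le_total 1 ‖x‖ with h1 | h1
  · refine le_trans (le_of_eq ?_) (kp_ineq hp1 (norm_nonneg x))
    have hx : 0 < ‖x‖ := by linarith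
    have e : (max 1 ‖x‖)⁻¹ • x - x = -((1 - ‖x‖⁻¹) • x) := by
      rw [max_eq_right h1, sub_smul, one_smul]; abel
    rw [truncB_smul_eq, e, norm_neg, norm_smul,
      Real.norm_of_nonneg (by linarith [inv_le_one_of_one_le₀ h1])]
    field_simp
  · rw [truncB_smul_eq, max_eq_left h1, inv_one, one_smul, sub_self, norm_zero]
    have := kp_nonneg hp1
    positivity

lemma step_bounds {B : Type*} [NormedAddCommGroup B] [NormedSpace ℝ B] [CompleteSpace B]
    {Ω : Type*} {mΩ : MeasurableSpace Ω} {P : Measure Ω} [IsProbabilityMeasure P]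
    {p A : ℝ} (hp1 : 1 < p) (hp2 : p ≤ 2) {m : MeasurableSpace Ω} (hm : m ≤ mΩ) {Y : Ω → B}
    (hY : StronglyMeasurable[mΩ] Y) (hYi : Integrable Y P)
    (hYp : Integrable (fun ω => ‖Y ω‖ ^ p) P)
    (hA : ∀ᵐ ω ∂P, (P[fun ω => ‖Y ω‖ ^ p | m]) ω ≤ A)
    {W : Ω → B} (hW : W = fun ω => truncB (Y ω) • Y ω) :
    StronglyMeasurable[mΩ] W ∧
    (∀ᵐ ω ∂P, ‖(P[W | m]) ω - (P[Y | m]) ω‖ ≤ Kp p * A) ∧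
    (∀ᵐ ω ∂P, (P[fun ω => ‖W ω - (P[W | m]) ω‖ ^ 2 | m]) ω ≤ 4 * A) ∧
    (∀ᵐ ω ∂P, ‖W ω - (P[W | m]) ω‖ ≤ 2) ∧
    P[fun ω => W ω - (P[W | m]) ω | m] =ᵐ[P] 0 := by
  have hWm : StronglyMeasurable[mΩ] W := by
    have hc : Continuous fun x : B => (max 1 ‖x‖)⁻¹ • x :=
      Continuous.smul (Continuous.inv₀ (by fun_prop) fun x => by positivity) continuous_id
    have : W = fun ω => (max 1 ‖Y ω‖)⁻¹ • Y ω := by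
      rw [hW]; funext ω; exact truncB_smul_eq _
    rw [this]
    exact hc.comp_stronglyMeasurable hY
  have hW1 : ∀ ω, ‖W ω‖ ≤ 1 := by
    intro ω; rw [hW]; exact truncB_norm_le_one _
  have hWi : Integrable W P :=
    Integrable.of_bound hWm.aestronglyMeasurable 1 (Filter.Eventually.of_forall hW1)
  have hE1 : ∀ᵐ ω ∂P, ‖(P[W | m]) ω‖ ≤ 1 :=
    ae_bdd_norm_condExp_of_ae_bdd_norm (Filter.Eventually.of_forall hW1)
  have hEm : StronglyMeasurable[m] (P[W | m]) := stronglyMeasurable_condExp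
  have hW2i : Integrable (fun ω => ‖W ω‖ ^ 2) P := by
    refine Integrable.of_bound (hWm.norm.pow 2).aestronglyMeasurable 1
      (Filter.Eventually.of_forall fun ω => ?_)
    rw [Real.norm_of_nonneg (by positivity)]
    exact pow_le_one₀ (norm_nonneg _) (hW1 ω)
  have hE2i : Integrable (fun ω => ‖(P[W | m]) ω‖ ^ 2) P := by
    refine Integrable.of_bound ((hEm.mono hm).norm.pow 2).aestronglyMeasurable 1 ?_
    filter_upwards [hE1] with ω h
    rw [Real.norm_of_nonneg (by positivity)]
    exact pow_le_one₀ (norm_nonneg _) h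
  have hd2 : ∀ᵐ ω ∂P, ‖W ω - (P[W | m]) ω‖ ≤ 2 := by
    filter_upwards [hE1] with ω h
    refine (norm_sub_le _ _).trans ?_
    linarith [hW1 ω]
  refine ⟨hWm, ?_, ?_, hd2, ?_⟩
  · have h1 := condExp_sub hWi hYi m
    have h2 := norm_condExp_le (μ := P) (m := m) (W - Y)
    have h3 : P[fun ω => ‖(W - Y) ω‖ | m] ≤ᵐ[P] P[fun ω => Kp p * ‖Y ω‖ ^ p | m] := by
      refine condExp_mono (hWi.sub hYi).norm (hYp.const_mul _)
        (Filter.Eventually.of_forall fun ω => ?_)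
      simp only [Pi.sub_apply, hW]
      exact truncB_bias_le hp1 _
    have h4 : P[fun ω => Kp p * ‖Y ω‖ ^ p | m] =ᵐ[P] Kp p • P[fun ω => ‖Y ω‖ ^ p | m] :=
      condExp_smul (Kp p) (fun ω => ‖Y ω‖ ^ p) m
    filter_upwards [h1, h2, h3, h4, hA] with ω g1 g2 g3 g4 g5
    rw [g1] at g2
    refine (g2.trans g3).trans ?_
    rw [g4]
    exact mul_le_mul_of_nonneg_left g5 (kp_nonneg hp1)
  · have h1 : P[fun ω => ‖W ω - (P[W | m]) ω‖ ^ 2 | m] ≤ᵐ[P]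
        P[(2 : ℝ) • ((fun ω => ‖W ω‖ ^ 2) + fun ω => ‖(P[W | m]) ω‖ ^ 2) | m] := by
      refine condExp_mono ?_ ((hW2i.add hE2i).smul (2 : ℝ))
        (Filter.Eventually.of_forall fun ω => ?_)
      · refine Integrable.of_bound (C := 2 ^ 2)
          ((hWm.sub (hEm.mono hm)).norm.pow 2).aestronglyMeasurable ?_
        filter_upwards [hd2] with ω h
        rw [Real.norm_of_nonneg (by positivity)]
        exact pow_le_pow_left₀ (norm_nonneg _) h 2
      · simp only [Pi.smul_apply, Pi.add_apply, smul_eq_mul]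
        have := pow_le_pow_left₀ (norm_nonneg _) (norm_sub_le (W ω) ((P[W | m]) ω)) 2
        nlinarith [sq_nonneg (‖W ω‖ - ‖(P[W | m]) ω‖)]
    have h2 := condExp_smul (μ := P) (2 : ℝ)
      ((fun ω => ‖W ω‖ ^ 2) + fun ω => ‖(P[W | m]) ω‖ ^ 2) m
    have h3 := condExp_add hW2i hE2i m
    have h4 : P[fun ω => ‖(P[W | m]) ω‖ ^ 2 | m] = fun ω => ‖(P[W | m]) ω‖ ^ 2 :=
      condExp_of_stronglyMeasurable hm (hEm.norm.pow 2) hE2i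
    have h5 : (fun ω => ‖(P[W | m]) ω‖ ^ 2) ≤ᵐ[P] P[fun ω => ‖W ω‖ ^ 2 | m] := by
      have := Integrable.norm_condExp_rpow_le (μ := P) (m := m) (f := W) (p := 2) (by norm_num)
        (by simpa only [Real.rpow_two] using hW2i)
      simpa only [Real.rpow_two] using this
    have h6 : P[fun ω => ‖W ω‖ ^ 2 | m] ≤ᵐ[P] P[fun ω => ‖Y ω‖ ^ p | m] := by
      refine condExp_mono hW2i hYp (Filter.Eventually.of_forall fun ω => ?_)
      simp only [hW]
      exact truncB_sq_le hp1 hp2 _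
    filter_upwards [h1, h2, h3, h5, h6, hA] with ω g1 g2 g3 g5 g6 g7
    rw [g2, Pi.smul_apply, g3, Pi.add_apply, h4, smul_eq_mul] at g1
    linarith
  · have h1 := condExp_sub hWi (integrable_condExp (μ := P) (m := m) (f := W)) m
    have h2 : P[P[W | m] | m] = P[W | m] :=
      condExp_of_stronglyMeasurable hm hEm integrable_condExp
    refine Filter.EventuallyEq.trans h1 ?_
    rw [h2, sub_self]


/-! ### The main bound for a uniformly bounded initial estimate -/

lemma lam_identity {x y p : ℝ} (hx : 0 < x) (hy : 0 < y) (hp : 1 < p) :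
    x / (x / y) ^ (1 / p) = y ^ (1 / p) * x ^ ((p - 1) / p) := by
  have hp0 : p ≠ 0 := by linarith
  have e : (p - 1) / p = 1 - 1 / p := by field_simp
  rw [e, Real.rpow_sub hx, Real.rpow_one, Real.div_rpow hx.le hy.le]
  have h1 : 0 < x ^ (1 / p) := Real.rpow_pos_of_pos hx _
  have h2 : 0 < y ^ (1 / p) := Real.rpow_pos_of_pos hy _
  field_simp

lemma norm_sub_rpow_le {B : Type*} [NormedAddCommGroup B] {p : ℝ} (hp1 : 1 < p) (x y z : B) :
    ‖x - z‖ ^ p ≤ 2 ^ (p - 1) * (‖x - y‖ ^ p + ‖y - z‖ ^ p) := by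
  have h1 : ‖x - z‖ ≤ ‖x - y‖ + ‖y - z‖ := norm_sub_le_norm_sub_add_norm_sub x y z
  refine (Real.rpow_le_rpow (norm_nonneg _) h1 (by linarith)).trans ?_
  have := NNReal.rpow_add_le_mul_rpow_add_rpow ‖x - y‖₊ ‖y - z‖₊ hp1.le
  exact_mod_cast this

lemma frakC_nonneg (p ρ : ℝ) : 0 ≤ frakC p ρ := by
  unfold frakC
  have : 0 ≤ Real.exp (2 * ρ) - 2 * ρ - 1 := by linarith [Real.add_one_le_exp (2 * ρ)]
  positivity

lemma main_bdd
    {B : Type*} [NormedAddCommGroup B] [NormedSpace ℝ B] [CompleteSpace B]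
    {Ω : Type*} {mΩ : MeasurableSpace Ω} {P : Measure Ω} [IsProbabilityMeasure P]
    (β : ℝ) (hβ : 1 ≤ β)
    (hsmooth : ∀ x y : B, ‖x + y‖ ^ 2 + ‖x - y‖ ^ 2 ≤ 2 * ‖x‖ ^ 2 + 2 * β ^ 2 * ‖y‖ ^ 2)
    (ℱ : Filtration ℕ mΩ) (X : ℕ → Ω → B) (μ : B) (p v : ℝ)
    (hp1 : 1 < p) (hp2 : p ≤ 2) (hv : 0 < v)
    (hadapted : ∀ n : ℕ, 1 ≤ n → StronglyMeasurable[ℱ n] (X n))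
    (hint : ∀ n : ℕ, 1 ≤ n → Integrable (X n) P)
    (hmom : ∀ n : ℕ, 1 ≤ n → Integrable (fun ω => ‖X n ω‖ ^ p) P)
    (hcondmean : ∀ n : ℕ, P[X (n + 1) | ℱ n] =ᵐ[P] fun _ => μ)
    (hcondmom : ∀ n : ℕ, ∀ᵐ ω ∂P, (P[fun ω' => ‖X (n + 1) ω' - μ‖ ^ p | ℱ n]) ω ≤ v)
    (k : ℕ) (Z : Ω → B) (hZ : StronglyMeasurable[ℱ k] Z)
    (r₂ : ℝ) (hr₂ : 0 ≤ r₂) (hZr : ∀ ω, ‖μ - Z ω‖ ≤ r₂)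
    (δ₁ : ℝ) (hδ₁ : δ₁ ∈ Set.Ioo (0 : ℝ) 1)
    (N : ℕ) (hN : k < N) (lam : ℝ)
    (hlam : lam = (β * Real.log (2 / δ₁) /
      (((N : ℝ) - k) * (β * frakC p (1 / β) + Kp p * 2 ^ (p - 1)) * (v + r₂ ^ p))) ^ (1 / p)) :
    P {ω | ¬ (‖((N : ℝ) - k)⁻¹ • (∑ m ∈ Finset.Ioc k N,
            (truncB (lam • (X m ω - Z ω)) • (X m ω - Z ω) + Z ω)) - μ‖ ≤
          2 * ((β * frakC p (1 / β) + Kp p * 2 ^ (p - 1)) * (v + r₂ ^ p)) ^ (1 / p) *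
            (β * Real.log (2 / δ₁) / ((N : ℝ) - k)) ^ ((p - 1) / p))} ≤ ENNReal.ofReal δ₁ := by
  have hβ0 : 0 < β := by linarith
  set Q := β * frakC p (1 / β) + Kp p * 2 ^ (p - 1) with hQ
  set V := v + r₂ ^ p with hV
  have hVpos : 0 < V := by have := Real.rpow_nonneg hr₂ p; linarith
  have hKpos : 0 < Kp p := by
    unfold Kp
    have : 0 < p - 1 := by linarith
    have : 0 < p := by linarith
    positivity
  have hQpos : 0 < Q := by
    have := frakC_nonneg p (1 / β)
    positivity
  set n : ℕ := N - k with hn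
  have hnN : (N : ℝ) - k = (n : ℝ) := by rw [hn, Nat.cast_sub hN.le]
  have hnpos : (0 : ℝ) < n := by exact_mod_cast Nat.sub_pos_of_lt hN
  rw [hnN] at hlam ⊢
  have hlog : 0 < Real.log (2 / δ₁) := by
    apply Real.log_pos
    rw [lt_div_iff₀ hδ₁.1]; linarith [hδ₁.2]
  set L := β * Real.log (2 / δ₁) with hL
  have hLpos : 0 < L := by positivity
  have hlam' : lam = (L / n / (Q * V)) ^ (1 / p) := by
    rw [hlam]; congr 1; rw [div_div, mul_assoc]
  have hlampos : 0 < lam := by rw [hlam']; positivity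
  have hlamp : lam ^ p = L / n / (Q * V) := by
    rw [hlam', ← Real.rpow_mul (by positivity), one_div_mul_cancel (by linarith), Real.rpow_one]
  set A := lam ^ p * (2 ^ (p - 1) * V) with hA
  have hApos : 0 < A := by
    have := Real.rpow_pos_of_pos hlampos p
    positivity
  -- per-step data
  set Y : ℕ → Ω → B := fun i ω => lam • (X (k + i + 1) ω - Z ω) with hY
  set W : ℕ → Ω → B := fun i ω => truncB (Y i ω) • Y i ω with hW
  have hZm : ∀ i, StronglyMeasurable[ℱ (k + i)] Z := fun i => hZ.mono (ℱ.mono (by omega))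
  have hZint : Integrable Z P := by
    refine Integrable.of_bound (hZ.mono (ℱ.le k)).aestronglyMeasurable (r₂ + ‖μ‖)
      (Filter.Eventually.of_forall fun ω => ?_)
    have h1 : ‖Z ω‖ ≤ ‖μ - Z ω‖ + ‖μ‖ := by
      have := norm_sub_le μ (μ - Z ω)
      rw [sub_sub_cancel] at this; linarith
    linarith [hZr ω]
  have hYm' : ∀ i, StronglyMeasurable[ℱ (k + i + 1)] (Y i) := fun i =>
    ((hadapted (k + i + 1) (by omega)).sub (hZ.mono (ℱ.mono (by omega)))).const_smul lam
  have hYm : ∀ i, StronglyMeasurable[mΩ] (Y i) := fun i => (hYm' i).mono (ℱ.le _)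
  have hYi : ∀ i, Integrable (Y i) P := fun i =>
    ((hint (k + i + 1) (by omega)).sub hZint).smul lam
  have hXp : ∀ i, Integrable (fun ω => ‖X (k + i + 1) ω - μ‖ ^ p) P := by
    intro i
    have h1 := ((hmom (k + i + 1) (by omega)).add (integrable_const (‖μ‖ ^ p))).const_mul
      (2 ^ (p - 1) : ℝ)
    refine h1.mono' ?_ (Filter.Eventually.of_forall fun ω => ?_)
    · have hc : Continuous fun x : B => ‖x - μ‖ ^ p :=
        Continuous.rpow_const (by fun_prop) fun x => Or.inr (by linarith)
      exact (hc.comp_stronglyMeasurable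
        ((hadapted (k + i + 1) (by omega)).mono (ℱ.le _))).aestronglyMeasurable
    · rw [Real.norm_of_nonneg (by positivity)]
      have := norm_sub_rpow_le hp1 (X (k + i + 1) ω) 0 μ
      simpa using this
  have hYbound : ∀ i ω, ‖Y i ω‖ ^ p ≤
      (lam ^ p * 2 ^ (p - 1)) * (‖X (k + i + 1) ω - μ‖ ^ p + r₂ ^ p) := by
    intro i ω
    simp only [hY]
    rw [norm_smul, Real.norm_of_nonneg hlampos.le, Real.mul_rpow hlampos.le (norm_nonneg _), mul_assoc]
    refine mul_le_mul_of_nonneg_left ?_ (by positivity)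
    refine (norm_sub_rpow_le hp1 _ μ _).trans ?_
    refine mul_le_mul_of_nonneg_left ?_ (by positivity)
    have := Real.rpow_le_rpow (norm_nonneg _) (hZr ω) (by linarith : 0 ≤ p)
    linarith
  have hdom : ∀ i, Integrable (fun ω => (lam ^ p * 2 ^ (p - 1)) *
      (‖X (k + i + 1) ω - μ‖ ^ p + r₂ ^ p)) P := fun i =>
    ((hXp i).add (integrable_const (r₂ ^ p))).const_mul _
  have hYp : ∀ i, Integrable (fun ω => ‖Y i ω‖ ^ p) P := by
    intro i
    refine (hdom i).mono' ?_ (Filter.Eventually.of_forall fun ω => ?_)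
    · have hc : Continuous fun x : B => ‖x‖ ^ p :=
        Continuous.rpow_const (by fun_prop) fun x => Or.inr (by linarith)
      exact (hc.comp_stronglyMeasurable (hYm i)).aestronglyMeasurable
    · rw [Real.norm_of_nonneg (by positivity)]
      exact hYbound i ω
  have hYA : ∀ i, ∀ᵐ ω ∂P, (P[fun ω => ‖Y i ω‖ ^ p | ℱ (k + i)]) ω ≤ A := by
    intro i
    have h1 := condExp_mono (m := ℱ (k + i)) (hYp i) (hdom i)
      (Filter.Eventually.of_forall (hYbound i))
    have h2 : P[fun ω => (lam ^ p * 2 ^ (p - 1)) * (‖X (k + i + 1) ω - μ‖ ^ p + r₂ ^ p) | ℱ (k + i)]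
        =ᵐ[P] (lam ^ p * 2 ^ (p - 1)) •
          P[(fun ω => ‖X (k + i + 1) ω - μ‖ ^ p) + fun _ => r₂ ^ p | ℱ (k + i)] :=
      condExp_smul (lam ^ p * 2 ^ (p - 1))
        ((fun ω => ‖X (k + i + 1) ω - μ‖ ^ p) + fun _ => r₂ ^ p) (ℱ (k + i))
    have h3 := condExp_add (hXp i) (integrable_const (r₂ ^ p)) (ℱ (k + i))
    filter_upwards [h1, h2, h3, hcondmom (k + i)] with ω g1 g2 g3 g4
    rw [g2, Pi.smul_apply, g3, Pi.add_apply, condExp_const (ℱ.le _), smul_eq_mul] at g1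
    refine g1.trans ?_
    rw [hA, ← mul_assoc]
    exact mul_le_mul_of_nonneg_left (by linarith) (by positivity)
  have hYmean : ∀ i, ∀ᵐ ω ∂P, (P[Y i | ℱ (k + i)]) ω = lam • (μ - Z ω) := by
    intro i
    have h1 : P[Y i | ℱ (k + i)] =ᵐ[P] lam • P[X (k + i + 1) - Z | ℱ (k + i)] :=
      condExp_smul lam (X (k + i + 1) - Z) (ℱ (k + i))
    have h2 := condExp_sub (hint (k + i + 1) (by omega)) hZint (ℱ (k + i))
    have h3 : P[Z | ℱ (k + i)] = Z := condExp_of_stronglyMeasurable (ℱ.le _) (hZm i) hZint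
    filter_upwards [h1, h2, hcondmean (k + i)] with ω g1 g2 g3
    rw [g1, Pi.smul_apply, g2, Pi.sub_apply, g3, h3]
  have hsb := fun i => step_bounds hp1 hp2 (ℱ.le (k + i)) (hYm i) (hYi i) (hYp i) (hYA i)
    (W := W i) rfl
  have hWm' : ∀ i, StronglyMeasurable[ℱ (k + i + 1)] (W i) := by
    intro i
    have hc : Continuous fun x : B => (max 1 ‖x‖)⁻¹ • x :=
      Continuous.smul (Continuous.inv₀ (by fun_prop) fun x => by positivity) continuous_id
    have : W i = fun ω => (max 1 ‖Y i ω‖)⁻¹ • Y i ω := by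
      funext ω; exact truncB_smul_eq _
    rw [this]
    exact hc.comp_stronglyMeasurable (hYm' i)
  set d : ℕ → Ω → B := fun i ω => W i ω - (P[W i | ℱ (k + i)]) ω with hd
  set D : ℕ → Ω → B := fun i ω => (1 / β) • d i ω with hD
  have hDnorm : ∀ i ω, ‖D i ω‖ = 1 / β * ‖d i ω‖ := by
    intro i ω
    simp only [hD]
    rw [norm_smul, Real.norm_of_nonneg (by positivity)]
  have htail := mart_tail (P := P) (b := 2 * (1 / β)) (s := (1 / β) ^ 2 * (4 * A)) hβ (by positivity)
    (by positivity) hsmooth ℱ k n D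
    (fun i => ((hWm' i).sub (stronglyMeasurable_condExp.mono (ℱ.mono (by omega)))).const_smul _)
    (fun i => by
      filter_upwards [(hsb i).2.2.2.1] with ω h
      rw [hDnorm, mul_comm 2]
      exact mul_le_mul_of_nonneg_left h (by positivity))
    (fun i => by
      have h1 : P[D i | ℱ (k + i)] =ᵐ[P] (1 / β) • P[d i | ℱ (k + i)] :=
        condExp_smul (1 / β) (d i) (ℱ (k + i))
      filter_upwards [h1, (hsb i).2.2.2.2] with ω g1 g2
      rw [g1, Pi.smul_apply, g2]; simp)
    (fun i => by
      have e : (fun ω => ‖D i ω‖ ^ 2) = ((1 / β) ^ 2) • fun ω => ‖d i ω‖ ^ 2 := by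
        funext ω; rw [hDnorm, mul_pow]; rfl
      have h1 := condExp_smul (μ := P) ((1 / β) ^ 2) (fun ω => ‖d i ω‖ ^ 2) (ℱ (k + i))
      rw [e]
      filter_upwards [h1, (hsb i).2.2.1] with ω g1 g2
      rw [g1, Pi.smul_apply, smul_eq_mul]
      exact mul_le_mul_of_nonneg_left g2 (by positivity))
    δ₁ hδ₁.1
  have hκ : β ^ 2 * ((Real.exp (2 * (1 / β)) - 2 * (1 / β) - 1) / (2 * (1 / β)) ^ 2) *
      ((1 / β) ^ 2 * (4 * A)) = frakC p (1 / β) * lam ^ p * V := by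
    have e : (2 : ℝ) ^ (p + 1) = 4 * 2 ^ (p - 1) := by
      rw [show p + 1 = 2 + (p - 1) by ring, Real.rpow_add two_pos]; norm_num
    rw [hA]; unfold frakC; rw [e]; field_simp
  rw [hκ] at htail
  refine le_trans (measure_mono_ae ?_) htail
  have hbias := ae_all_iff.2 fun i => (hsb i).2.1
  have hmean := ae_all_iff.2 hYmean
  filter_upwards [hbias, hmean] with ω hb1 hb2 hω
  by_contra hcon
  refine hω ?_
  change ¬ (_ ≤ _) at hcon
  rw [not_le] at hcon
  -- bound on the martingale
  have hsumD : ∑ i ∈ Finset.range n, D i ω = (1 / β) • ∑ i ∈ Finset.range n, d i ω := by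
    simp only [hD]; rw [Finset.smul_sum]
  rw [hsumD, norm_smul, Real.norm_of_nonneg (by positivity), one_div_mul_eq_div, div_lt_iff₀ hβ0] at hcon
  have hbsum : ‖∑ i ∈ Finset.range n, ((P[W i | ℱ (k + i)]) ω - lam • (μ - Z ω))‖ ≤
      n * (Kp p * A) := by
    refine (norm_sum_le_of_le (n := fun _ => Kp p * A) _ fun i _ => ?_).trans (le_of_eq ?_)
    · rw [← hb2 i]; exact hb1 i
    · simp
  have hreidx : ∑ m ∈ Finset.Ioc k N, (truncB (lam • (X m ω - Z ω)) • (X m ω - Z ω) + Z ω) =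
      ∑ i ∈ Finset.range n, (truncB (Y i ω) • (X (k + i + 1) ω - Z ω) + Z ω) := by
    have e : Finset.Ioc k N = Finset.Ico (k + 1) (N + 1) := by
      ext j; simp only [Finset.mem_Ioc, Finset.mem_Ico]; omega
    rw [e, Finset.sum_Ico_eq_sum_range]
    have e2 : N + 1 - (k + 1) = n := by omega
    rw [e2]
    refine Finset.sum_congr rfl fun i _ => ?_
    rw [show k + 1 + i = k + i + 1 by omega]
  rw [hreidx]
  have hkey : (lam * n) • ((n : ℝ)⁻¹ • (∑ i ∈ Finset.range n,
      (truncB (Y i ω) • (X (k + i + 1) ω - Z ω) + Z ω)) - μ) =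
      ∑ i ∈ Finset.range n, d i ω +
      ∑ i ∈ Finset.range n, ((P[W i | ℱ (k + i)]) ω - lam • (μ - Z ω)) := by
    rw [← Finset.sum_add_distrib, smul_sub, smul_smul, mul_assoc, mul_inv_cancel₀ hnpos.ne', mul_one,
      Finset.smul_sum]
    have e : (lam * n) • μ = ∑ i ∈ Finset.range n, lam • μ := by
      rw [Finset.sum_const, Finset.card_range, mul_comm, mul_smul, Nat.cast_smul_eq_nsmul]
    rw [e, ← Finset.sum_sub_distrib]
    refine Finset.sum_congr rfl fun i _ => ?_
    have e3 : W i ω = lam • (truncB (Y i ω) • (X (k + i + 1) ω - Z ω)) := by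
      simp only [hW]
      rw [smul_comm]
    simp only [hd]
    rw [e3, smul_add, smul_sub lam μ]
    abel
  set Eerr := (n : ℝ)⁻¹ • (∑ i ∈ Finset.range n,
      (truncB (Y i ω) • (X (k + i + 1) ω - Z ω) + Z ω)) - μ with hEerr
  have hnorm : lam * n * ‖Eerr‖ ≤ 2 * L := by
    have h1 : lam * n * ‖Eerr‖ = ‖(lam * n) • Eerr‖ := by
      rw [norm_smul, Real.norm_of_nonneg (by positivity)]
    rw [h1, hkey]
    refine (norm_add_le _ _).trans ((add_le_add hcon.le hbsum).trans (le_of_eq ?_))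
    have h2 : (n : ℝ) * (lam ^ p * (Q * V)) = L := by rw [hlamp]; field_simp
    calc _ = L + n * (lam ^ p * (Q * V)) := by rw [hL, hA, hQ]; ring
      _ = _ := by rw [h2]; ring
  have hfin : 2 * (Q * V) ^ (1 / p) * (L / n) ^ ((p - 1) / p) = 2 * L / (lam * n) := by
    rw [mul_assoc, ← lam_identity (by positivity) (by positivity) hp1, ← hlam']
    field_simp
  rw [hfin, le_div_iff₀ (by positivity), mul_comm]
  exact hnorm

/-- **Line-crossing inequality optimized for a fixed sample size `N`.** With the choice
`λ = (β log(2/δ₁)/((N-k)(β𝔠_p + K_p2^{p-1})(v + r₂^p)))^{1/p}`, with probability at least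
`1 - δ₁ - δ₂`,
`‖μ̂_N(k) - μ‖ ≤ 2((β𝔠_p + K_p2^{p-1})(v + r₂^p))^{1/p}(β log(2/δ₁)/(N-k))^{(p-1)/p}`. -/
theorem stmt13
    {B : Type*} [NormedAddCommGroup B] [NormedSpace ℝ B] [CompleteSpace B]
    [TopologicalSpace.SeparableSpace B]
    {Ω : Type*} {mΩ : MeasurableSpace Ω} {P : Measure Ω} [IsProbabilityMeasure P]
    (β : ℝ) (hβ : 1 ≤ β)
    (hsmooth : ∀ x y : B, ‖x + y‖ ^ 2 + ‖x - y‖ ^ 2 ≤ 2 * ‖x‖ ^ 2 + 2 * β ^ 2 * ‖y‖ ^ 2)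
    (ℱ : Filtration ℕ mΩ) (X : ℕ → Ω → B) (μ : B) (p v : ℝ)
    (hp1 : 1 < p) (hp2 : p ≤ 2) (hv : 0 < v)
    (hadapted : ∀ n : ℕ, 1 ≤ n → StronglyMeasurable[ℱ n] (X n))
    (hint : ∀ n : ℕ, 1 ≤ n → Integrable (X n) P)
    (hmom : ∀ n : ℕ, 1 ≤ n → Integrable (fun ω => ‖X n ω‖ ^ p) P)
    (hcondmean : ∀ n : ℕ, P[X (n + 1) | ℱ n] =ᵐ[P] fun _ => μ)
    (hcondmom : ∀ n : ℕ, ∀ᵐ ω ∂P, (P[fun ω' => ‖X (n + 1) ω' - μ‖ ^ p | ℱ n]) ω ≤ v)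
    (k : ℕ) (Z : Ω → B) (hZ : StronglyMeasurable[ℱ k] Z)
    (δ₂ : ℝ) (hδ₂ : δ₂ ∈ Set.Ioo (0 : ℝ) 1) (r₂ : ℝ) (hr₂ : 0 ≤ r₂)
    (htail : P {ω | r₂ ≤ ‖μ - Z ω‖} ≤ ENNReal.ofReal δ₂)
    (δ₁ : ℝ) (hδ₁ : δ₁ ∈ Set.Ioo (0 : ℝ) 1) (hδ : δ₁ + δ₂ ≤ 1)
    (N : ℕ) (hN : k < N) (lam : ℝ)
    (hlam : lam = (β * Real.log (2 / δ₁) /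
      (((N : ℝ) - k) * (β * frakC p (1 / β) + Kp p * 2 ^ (p - 1)) * (v + r₂ ^ p))) ^ (1 / p)) :
    ENNReal.ofReal (1 - δ₁ - δ₂) ≤
      P {ω |
        ‖((N : ℝ) - k)⁻¹ • (∑ m ∈ Finset.Ioc k N,
            (truncB (lam • (X m ω - Z ω)) • (X m ω - Z ω) + Z ω)) - μ‖ ≤
          2 * ((β * frakC p (1 / β) + Kp p * 2 ^ (p - 1)) * (v + r₂ ^ p)) ^ (1 / p) *
            (β * Real.log (2 / δ₁) / ((N : ℝ) - k)) ^ ((p - 1) / p)} := by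
  set Z' : Ω → B := fun ω => if ‖μ - Z ω‖ < r₂ then Z ω else μ with hZ'
  have hmeas : MeasurableSet[ℱ k] {ω | ‖μ - Z ω‖ < r₂} := by
    have : StronglyMeasurable[ℱ k] fun ω => ‖μ - Z ω‖ := by
      have hc : Continuous fun x : B => ‖μ - x‖ := by fun_prop
      exact hc.comp_stronglyMeasurable hZ
    exact this.measurableSet_lt stronglyMeasurable_const
  have hZ'm : StronglyMeasurable[ℱ k] Z' :=
    StronglyMeasurable.ite hmeas hZ stronglyMeasurable_const
  have hZ'r : ∀ ω, ‖μ - Z' ω‖ ≤ r₂ := by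
    intro ω
    simp only [hZ']
    split_ifs with h
    · exact h.le
    · simpa using hr₂
  have hmain := main_bdd β hβ hsmooth ℱ X μ p v hp1 hp2 hv hadapted hint hmom hcondmean hcondmom
    k Z' hZ'm r₂ hr₂ hZ'r δ₁ hδ₁ N hN lam hlam
  have hcover : (1 : ENNReal) ≤ P {ω |
        ‖((N : ℝ) - k)⁻¹ • (∑ m ∈ Finset.Ioc k N,
            (truncB (lam • (X m ω - Z ω)) • (X m ω - Z ω) + Z ω)) - μ‖ ≤
          2 * ((β * frakC p (1 / β) + Kp p * 2 ^ (p - 1)) * (v + r₂ ^ p)) ^ (1 / p) *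
            (β * Real.log (2 / δ₁) / ((N : ℝ) - k)) ^ ((p - 1) / p)} +
      (ENNReal.ofReal δ₂ + ENNReal.ofReal δ₁) := by
    refine le_trans ?_ (add_le_add le_rfl (add_le_add htail hmain))
    rw [← measure_univ (μ := P)]
    refine le_trans (measure_mono ?_) ((measure_union_le _ _).trans
      (add_le_add le_rfl (measure_union_le _ _)))
    intro ω _
    by_cases h1 : r₂ ≤ ‖μ - Z ω‖
    · exact Or.inr (Or.inl h1)
    · have h2 : Z' ω = Z ω := by simp only [hZ']; rw [if_pos (not_le.1 h1)]
      by_cases h3 : ‖((N : ℝ) - k)⁻¹ • (∑ m ∈ Finset.Ioc k N,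
            (truncB (lam • (X m ω - Z ω)) • (X m ω - Z ω) + Z ω)) - μ‖ ≤
          2 * ((β * frakC p (1 / β) + Kp p * 2 ^ (p - 1)) * (v + r₂ ^ p)) ^ (1 / p) *
            (β * Real.log (2 / δ₁) / ((N : ℝ) - k)) ^ ((p - 1) / p)
      · exact Or.inl h3
      · refine Or.inr (Or.inr ?_)
        change ¬ _
        rw [h2]
        exact h3
  rw [← ENNReal.ofReal_add hδ₂.1.le hδ₁.1.le] at hcover
  rw [sub_sub, ENNReal.ofReal_sub _ (by linarith [hδ₂.1, hδ₁.1]), ENNReal.ofReal_one,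
    tsub_le_iff_right, add_comm δ₁ δ₂]
  exact hcover
end
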